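/- Let K satisfy Assumption A and let f_in be a nonzero nonnegative Radon measure on (0,∞) with ∫(1+v^γ) f_in(dv) < ∞ which is not a single Dirac measure (there are no M, V ∈ (0,∞) with f_in = M·δ_V). Then for every T > 0 there exists no weak solution of the coagulation equation on [0,T] with kernel K and initial datum f_in — neither mass-conserving nor mass-losing. -/

import Mathlib

open MeasureTheory Set Filter

noncomputable section

/-- Assumption A on the coagulation kernel `K(v,v') = h(v,v') g(v/(v+v'))`. -/
structure KernelAssumptionA (K : ℝ → ℝ → ℝ) (h : ℝ → ℝ → ℝ) (g : ℝ → ℝ)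
    (γ H H₀ H₁ G₀ G₁ k : ℝ) : Prop where
  K_nonneg : ∀ v v', 0 ≤ v → 0 ≤ v' → 0 ≤ K v v'
  K_eq : ∀ v v', 0 ≤ v → 0 ≤ v' → 0 < v + v' →
      K v v' = h v v' * g (v / (v + v'))
  h_cont : ContinuousOn (fun p : ℝ × ℝ => h p.1 p.2) (Ici 0 ×ˢ Ici 0)
  h_symm : ∀ v v', h v v' = h v' v
  γ_gt_one : 1 < γ
  H_gt_one : 1 < H
  H₀_pos : 0 < H₀
  h_lower : ∀ v v', 0 ≤ v → 0 ≤ v' → H < v + v' →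
      H₀ * (v ^ γ + v' ^ γ) ≤ h v v'
  h_posOn : ∀ R : ℝ, 0 < R → ∃ C : ℝ, 0 < C ∧
      ∀ v ∈ Icc (1 / R) R, ∀ v' ∈ Icc (1 / R) R, C ≤ h v v'
  H₁_pos : 0 < H₁
  h_upper : ∀ v v', 0 ≤ v → 0 ≤ v' → h v v' ≤ H₁ * (v ^ γ + v' ^ γ)
  g_cont : ContinuousOn g (Icc 0 1)
  g_symm : ∀ x ∈ Icc (0 : ℝ) 1, g x = g (1 - x)
  g_half : g (1 / 2) = 0
  G₀_pos : 0 < G₀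
  G₁_pos : 0 < G₁
  k_ge_one : 1 ≤ k
  g_lower : ∀ x ∈ Icc (0 : ℝ) 1, G₀ * |x - 1 / 2| ^ k ≤ g x
  g_upper : ∀ x ∈ Icc (0 : ℝ) 1, g x ≤ G₁

/-- Weak solution of the coagulation equation on `[0, T]` with kernel `K`
and initial datum `fin`, in the sense of measures on `(0,∞)`. -/
structure IsWeakSolution (K : ℝ → ℝ → ℝ) (γ T : ℝ)
    (f : ℝ → Measure ℝ) (fin : Measure ℝ) : Prop where
  conc : ∀ t ∈ Icc (0 : ℝ) T, f t (Iic 0) = 0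
  time_cont : ∀ φ : ℝ → ℝ, Continuous φ → (∃ M : ℝ, ∀ v, |φ v| ≤ M) →
      ContinuousOn (fun t => ∫ v, φ v ∂(f t)) (Icc (0 : ℝ) T)
  moment_bound : ∃ C : ℝ, ∀ t ∈ Icc (0 : ℝ) T,
      Integrable (fun v => 1 + v ^ γ) (f t) ∧ (∫ v, (1 + v ^ γ) ∂(f t)) ≤ C
  weak_form : ∀ φ : ℝ → ℝ, Continuous φ → HasCompactSupport φ →
      tsupport φ ⊆ Ioi 0 → ∀ t ∈ Icc (0 : ℝ) T,
      (∫ v, φ v ∂(f t)) - (∫ v, φ v ∂fin) =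
        (1 / 2) * ∫ s in (0 : ℝ)..t,
          (∫ v, (∫ v', K v v' * (φ (v + v') - φ v - φ v') ∂(f s)) ∂(f s))

/-- The solution conserves mass on `[0, T]`. -/
def IsMassConserving (T : ℝ) (f : ℝ → Measure ℝ) (fin : Measure ℝ) : Prop :=
  Integrable (fun v => v) fin ∧
    ∀ t ∈ Icc (0 : ℝ) T,
      Integrable (fun v => v) (f t) ∧ (∫ v, v ∂(f t)) = ∫ v, v ∂fin

/-- `μ` is a single Dirac measure `M • δ_V` with `M, V ∈ (0,∞)`. -/
def IsSingleDirac (μ : Measure ℝ) : Prop :=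
  ∃ M V : ℝ, 0 < M ∧ 0 < V ∧ μ = ENNReal.ofReal M • Measure.dirac V

/-!
A solution issued from two distinct sizes `x < y` has, at every positive time, the sizes `n x + y`
in its support, because supports persist and add up; so it is unbounded. On the other hand particles
near `x` stay present, and a particle of size `v` swallows them at a rate of order `v ^ γ`. With the
weight `q v = 1 - (R / v) ^ (γ - 1)`, whose increments are of order `v ^ (-γ)`, this makes the
integral of `v * q v ^ N` grow like `exp (κ N t)`. It stays below the first moment, which is bounded
independently of `N`, so on a time interval of length `τ` nothing can start beyond a size `L` with
`exp (κ τ) * q L > 1`: at every time before `T` the support is bounded.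
-/

open scoped Topology NNReal

section Growth

/-- The average of `y` over `[x, z]` tends to `y x`, so the right slopes of `y` at `x` are at least
`A * y x` in the limit: this is the differential Grönwall inequality for `-y`. -/
theorem mul_exp_le_of_mul_integral_le_sub {y : ℝ → ℝ} {A a b : ℝ} (hab : a ≤ b)
    (hy : ContinuousOn y (Icc a b))
    (h : ∀ s t, a ≤ s → s ≤ t → t ≤ b → A * ∫ r in s..t, y r ≤ y t - y s) :
    y a * Real.exp (A * (b - a)) ≤ y b := by
  have slope_lt : ∀ x ∈ Ico a b, ∀ r, A * -y x < r →
      ∃ᶠ z in 𝓝[>] x, (z - x)⁻¹ * (-y z - -y x) < r := by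
    intro x hx r hr
    have hsub : Icc x b ⊆ Icc a b := Icc_subset_Icc_left hx.1
    have hx_lt : ∀ᶠ z in 𝓝[>] x, z ∈ Ioc x b := Ioc_mem_nhdsGT hx.2
    have hderiv : HasDerivWithinAt (fun z => ∫ u in x..z, y u) (y x) (Ici x) x := by
      refine intervalIntegral.integral_hasDerivWithinAt_right (t := Ioi x) (by simp) ?_ ?_
      · refine ⟨Ioc x b, Ioc_mem_nhdsGT hx.2, ?_⟩
        exact ((hy.mono hsub).mono Ioc_subset_Icc_self).aestronglyMeasurable measurableSet_Ioc
      · exact ((hy x (Ico_subset_Icc_self hx)).mono hsub).mono_of_mem_nhdsWithin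
          (Icc_mem_nhdsGT hx.2)
    have hlim := (hasDerivWithinAt_iff_tendsto_slope' self_notMem_Ioi).1 hderiv.Ioi_of_Ici
    have hev := (hlim.const_mul (-A)).eventually_lt_const (by simpa using hr)
    refine (hev.and hx_lt).frequently.mono fun z hz => lt_of_le_of_lt ?_ hz.1
    have hxz : 0 < z - x := sub_pos.2 hz.2.1
    calc (z - x)⁻¹ * (-y z - -y x) = (z - x)⁻¹ * -(y z - y x) := by ring
      _ ≤ (z - x)⁻¹ * -(A * ∫ u in x..z, y u) := by
        have := h x z hx.1 hz.2.1.le hz.2.2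
        gcongr
      _ = -A * slope (fun z => ∫ u in x..z, y u) x z := by
        simp only [slope_def_field, intervalIntegral.integral_same, sub_zero]
        ring
  have bound := le_gronwallBound_of_liminf_deriv_right_le (K := A) hy.neg slope_lt le_rfl
    (fun x _ => (add_zero (A * -y x)).ge) b (right_mem_Icc.2 hab)
  rw [gronwallBound_ε0, Pi.neg_apply, Pi.neg_apply] at bound
  linarith

end Growth

section Measures

/-- Portmanteau-type argument: the measures of closed sets are limits of integrals of bounded
continuous functions. -/
theorem measurable_of_measurable_integral {α Ω : Type*} [MeasurableSpace α] [MeasurableSpace Ω]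
    [PseudoEMetricSpace Ω] [BorelSpace Ω] {μ : α → Measure Ω} [∀ x, IsFiniteMeasure (μ x)]
    (h : ∀ φ : Ω → ℝ, Continuous φ → (∃ M, ∀ v, |φ v| ≤ M) → Measurable fun x => ∫ v, φ v ∂μ x) :
    Measurable μ := by
  have closed : ∀ F : Set Ω, IsClosed F → Measurable fun x => μ x F := by
    intro F hF
    have pos : ∀ n : ℕ, (0 : ℝ) < 1 / ((n : ℝ) + 1) := fun n => Nat.one_div_pos_of_nat
    have approx : Measurable fun x => (μ x).real F := by
      refine measurable_of_tendsto_metrizable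
        (fun n => h (fun v => thickenedIndicator (pos n) F v) (by fun_prop) ⟨1, fun v => ?_⟩)
        (tendsto_pi_nhds.2 fun x => tendsto_integral_thickenedIndicator_of_isClosed (μ x) hF pos
          tendsto_one_div_add_atTop_nhds_zero_nat)
      rw [abs_of_nonneg (by positivity)]
      exact_mod_cast thickenedIndicator_le_one (pos n) F v
    simpa [Measure.real] using approx.ennreal_ofReal
  refine Measurable.measure_of_isPiSystem (S := {s | IsClosed s}) ?_ isPiSystem_isClosed closed
    (closed _ isClosed_univ)
  rw [BorelSpace.measurable_eq (α := Ω), borel_eq_generateFrom_isClosed]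

theorem measurable_integral_prod_self {α Ω : Type*} [MeasurableSpace α] [MeasurableSpace Ω]
    {μ : α → Measure Ω} (hμ : Measurable μ) {M : NNReal} (hM : ∀ x, μ x univ ≤ M)
    {F : Ω × Ω → ℝ} (hF : Measurable F) :
    Measurable fun x => ∫ p, F p ∂(μ x).prod (μ x) := by
  let κ : ProbabilityTheory.Kernel α Ω := ⟨μ, hμ⟩
  have : ProbabilityTheory.IsFiniteKernel κ := ⟨M, ENNReal.coe_lt_top, hM⟩
  have key : StronglyMeasurable fun x => ∫ p, F p ∂(ProbabilityTheory.Kernel.prod κ κ) x :=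
    hF.stronglyMeasurable.integral_kernel
  simp only [ProbabilityTheory.Kernel.prod_apply] at key
  exact key.measurable

theorem mk_mem_support_prod {X Y : Type*} [MeasurableSpace X] [MeasurableSpace Y]
    [TopologicalSpace X] [TopologicalSpace Y] {μ : Measure X} {ν : Measure Y} [SFinite ν]
    {x : X} {y : Y} (hx : x ∈ μ.support) (hy : y ∈ ν.support) : (x, y) ∈ (μ.prod ν).support := by
  refine (Measure.mem_support_iff_forall _).2 fun W hW => ?_
  obtain ⟨U, hU, V, hV, hUV⟩ := mem_nhds_prod_iff.1 hW
  calc 0 < μ U * ν V := ENNReal.mul_pos ((Measure.mem_support_iff_forall x).1 hx U hU).ne'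
        ((Measure.mem_support_iff_forall y).1 hy V hV).ne'
    _ = μ.prod ν (U ×ˢ V) := (Measure.prod_prod U V).symm
    _ ≤ μ.prod ν W := measure_mono hUV

theorem nontrivial_support_inter_Ioi {ν : Measure ℝ} [IsFiniteMeasureOnCompacts ν]
    (hconc : ν (Iic 0) = 0) (hne : ν ≠ 0) (hdirac : ¬ IsSingleDirac ν) :
    (ν.support ∩ Ioi 0).Nontrivial := by
  have null : ν (ν.support ∩ Ioi 0)ᶜ = 0 := by
    rw [compl_inter, compl_Ioi]
    exact measure_union_null Measure.measure_compl_support hconc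
  by_contra hsub
  rcases (not_nontrivial_iff.1 hsub).eq_empty_or_singleton with hempty | ⟨V, hV⟩
  · rw [hempty, compl_empty] at null
    exact hne (Measure.measure_univ_eq_zero.1 null)
  · have V_pos : 0 < V := (hV.ge rfl).2
    rw [hV] at null
    have atom : ν {V} • Measure.dirac V = ν := by
      rw [← Measure.restrict_singleton]
      exact Measure.restrict_eq_self_of_ae_mem (ae_iff.2 null)
    have finite : ν {V} ≠ ⊤ := isCompact_singleton.measure_lt_top.ne
    refine hdirac ⟨(ν {V}).toReal, V, ENNReal.toReal_pos (fun h0 => hne ?_) finite, V_pos, ?_⟩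
    · rw [← atom, h0, zero_smul]
    · rw [ENNReal.ofReal_toReal finite, atom]

end Measures

section Kernels

/-- The part of Assumption A that drives the argument, for a kernel in no particular form:
`K` may vanish on the diagonal, is bounded by `B (v^γ + w^γ)`, and grows at least like `v^γ` as
`v → ∞` with `w` in a fixed compact interval. Only values on the open quadrant matter, hence the
indicator in the measurability condition. -/
structure IsSuperlinearKernel (K : ℝ → ℝ → ℝ) (γ B : ℝ) : Prop where
  one_lt : 1 < γ
  measurable_indicator :
    Measurable ((Ioi 0 ×ˢ Ioi 0).indicator fun p : ℝ × ℝ => K p.1 p.2)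
  nonneg : ∀ v w, 0 < v → 0 < w → 0 ≤ K v w
  pos_of_ne : ∀ v w, 0 < v → 0 < w → v ≠ w → 0 < K v w
  le_mul_add : ∀ v w, 0 < v → 0 < w → K v w ≤ B * (v ^ γ + w ^ γ)
  eventually_mul_rpow_le : ∀ a b, 0 < a →
    ∃ c > 0, ∀ᶠ v in atTop, ∀ w ∈ Icc a b, c * v ^ γ ≤ K v w

/-- The change `φ(v + w) - φ(v) - φ(w)` of the observable `φ` when `v` and `w` coagulate. -/
def coagIncrement (φ : ℝ → ℝ) (p : ℝ × ℝ) : ℝ := φ (p.1 + p.2) - φ p.1 - φ p.2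

/-- Twice the rate of change of `∫ φ` under coagulation in the state `m`, written as an integral
against `m ⊗ m` rather than as the iterated integral of `IsWeakSolution`. -/
def coagIntegral (K : ℝ → ℝ → ℝ) (φ : ℝ → ℝ) (m : Measure ℝ) : ℝ :=
  ∫ p, K p.1 p.2 * coagIncrement φ p ∂m.prod m

/-- A measure carried by `(0, ∞)` with finite mass and finite `γ`-moment, encoded as a measure
on `ℝ`. -/
structure HasFiniteMoment (γ : ℝ) (m : Measure ℝ) : Prop where
  measure_Iic : m (Iic 0) = 0
  integrable : Integrable (fun v => 1 + v ^ γ) m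

/-- The test functions of the argument. They need not have compact support: truncating them at
infinity is harmless in the weak formulation because the `γ`-moment is bounded. -/
structure IsLipschitzTest (φ : ℝ → ℝ) : Prop where
  nonneg : ∀ v, 0 ≤ φ v
  exists_lipschitzWith : ∃ Λ, LipschitzWith Λ φ
  exists_eq_zero_of_le : ∃ ε > 0, ∀ v ≤ ε, φ v = 0

variable {K : ℝ → ℝ → ℝ} {γ B : ℝ} {m : Measure ℝ} {φ : ℝ → ℝ} {Λ : ℝ≥0}

namespace IsLipschitzTest

theorem continuous (hφ : IsLipschitzTest φ) : Continuous φ :=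
  hφ.exists_lipschitzWith.choose_spec.continuous

theorem map_zero (hφ : IsLipschitzTest φ) : φ 0 = 0 :=
  have ⟨_, hε, h⟩ := hφ.exists_eq_zero_of_le
  h 0 hε.le

end IsLipschitzTest

namespace HasFiniteMoment

theorem ae_pos (hm : HasFiniteMoment γ m) : ∀ᵐ v ∂m, 0 < v := by
  simpa [ae_iff, Iic_def] using hm.measure_Iic

theorem ae_prod_pos (hm : HasFiniteMoment γ m) : ∀ᵐ p ∂m.prod m, 0 < p.1 ∧ 0 < p.2 :=
  (Measure.quasiMeasurePreserving_fst.ae hm.ae_pos).and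
    (Measure.quasiMeasurePreserving_snd.ae hm.ae_pos)

theorem integrable_one (hm : HasFiniteMoment γ m) : Integrable (fun _ => (1 : ℝ)) m := by
  refine hm.integrable.mono' aestronglyMeasurable_const ?_
  filter_upwards [hm.ae_pos] with v hv
  simpa using Real.rpow_nonneg hv.le γ

theorem isFiniteMeasure (hm : HasFiniteMoment γ m) : IsFiniteMeasure m :=
  (integrable_const_iff.1 hm.integrable_one).resolve_left one_ne_zero

theorem measure_univ_le (hm : HasFiniteMoment γ m) :
    m univ ≤ ENNReal.ofReal (∫ v, (1 + v ^ γ) ∂m) := by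
  have := hm.isFiniteMeasure
  rw [← ofReal_measureReal]
  gcongr
  calc m.real univ = ∫ _, (1 : ℝ) ∂m := by simp
    _ ≤ ∫ v, (1 + v ^ γ) ∂m := by
      refine integral_mono_ae hm.integrable_one hm.integrable ?_
      filter_upwards [hm.ae_pos] with v hv
      simpa using Real.rpow_nonneg hv.le γ

theorem integral_nonneg (hm : HasFiniteMoment γ m) : 0 ≤ ∫ v, (1 + v ^ γ) ∂m := by
  refine integral_nonneg_of_ae ?_
  filter_upwards [hm.ae_pos] with v hv
  exact add_nonneg zero_le_one (Real.rpow_nonneg hv.le γ)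

end HasFiniteMoment

theorem le_one_add_rpow (hγ : 1 ≤ γ) {v : ℝ} (hv : 0 ≤ v) : v ≤ 1 + v ^ γ := by
  rcases le_total v 1 with h | h
  · linarith [Real.rpow_nonneg hv γ]
  · linarith [Real.self_le_rpow_of_one_le h hγ]

theorem abs_le_mul_abs_of_lipschitzWith (hφ : LipschitzWith Λ φ) (h0 : φ 0 = 0) (v : ℝ) :
    |φ v| ≤ Λ * |v| := by
  simpa [h0, Real.dist_eq] using hφ.dist_le_mul v 0

theorem integrable_of_lipschitzWith (hγ : 1 ≤ γ) (hm : HasFiniteMoment γ m)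
    (hφ : LipschitzWith Λ φ) (h0 : φ 0 = 0) : Integrable φ m := by
  refine (hm.integrable.const_mul Λ).mono' hφ.continuous.aestronglyMeasurable ?_
  filter_upwards [hm.ae_pos] with v hv
  calc ‖φ v‖ ≤ Λ * |v| := abs_le_mul_abs_of_lipschitzWith hφ h0 v
    _ ≤ Λ * (1 + v ^ γ) := by
      rw [abs_of_pos hv]
      gcongr
      exact le_one_add_rpow hγ hv.le

theorem rpow_add_rpow_mul_le_of_eq_zero (hγ : 0 ≤ γ) (hφ : ∀ v, 0 ≤ φ v) {b : ℝ} (hb : 0 ≤ b)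
    (hφb : ∀ v, b ≤ v → φ v = 0) {v w : ℝ} (hv : 0 ≤ v) (hw : 0 ≤ w) :
    (v ^ γ + w ^ γ) * φ v ≤ (1 + b ^ γ) * (φ v * (1 + w ^ γ)) := by
  rcases le_total b v with h | h
  · simp [hφb v h]
  · have b_nonneg := Real.rpow_nonneg hb γ
    have w_nonneg := Real.rpow_nonneg hw γ
    have v_le := Real.rpow_le_rpow hv h hγ
    calc (v ^ γ + w ^ γ) * φ v ≤ ((1 + b ^ γ) * (1 + w ^ γ)) * φ v := by
          gcongr
          · exact hφ v
          · nlinarith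
      _ = (1 + b ^ γ) * (φ v * (1 + w ^ γ)) := by ring

theorem abs_coagIncrement_le (hφ : LipschitzWith Λ φ) (h0 : φ 0 = 0) {v w : ℝ} (hv : 0 ≤ v)
    (hw : 0 ≤ w) : |coagIncrement φ (v, w)| ≤ 2 * Λ * min v w := by
  have small (x : ℝ) (hx : 0 ≤ x) : |φ x| ≤ Λ * x := by
    simpa [abs_of_nonneg hx] using abs_le_mul_abs_of_lipschitzWith hφ h0 x
  have shift (x y : ℝ) (hy : 0 ≤ y) : |φ (x + y) - φ x| ≤ Λ * y := by
    simpa [Real.dist_eq, abs_of_nonneg hy] using hφ.dist_le_mul (x + y) x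
  rcases le_total v w with h | h
  · rw [min_eq_left h]
    calc |coagIncrement φ (v, w)| = |(φ (w + v) - φ w) - φ v| := by
          rw [coagIncrement, add_comm v w]; ring_nf
      _ ≤ |φ (w + v) - φ w| + |φ v| := abs_sub _ _
      _ ≤ 2 * Λ * v := by linarith [small v hv, shift w v hv]
  · rw [min_eq_right h]
    calc |coagIncrement φ (v, w)| ≤ |φ (v + w) - φ v| + |φ w| := abs_sub _ _
      _ ≤ 2 * Λ * w := by linarith [small w hw, shift v w hw]

namespace IsSuperlinearKernel

theorem bound_nonneg (hK : IsSuperlinearKernel K γ B) : 0 ≤ B := by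
  have h := (hK.nonneg 1 1 one_pos one_pos).trans (hK.le_mul_add 1 1 one_pos one_pos)
  norm_num at h
  linarith

theorem abs_mul_coagIncrement_le (hK : IsSuperlinearKernel K γ B) (hφ : LipschitzWith Λ φ)
    (h0 : φ 0 = 0) {v w : ℝ} (hv : 0 < v) (hw : 0 < w) :
    |K v w * coagIncrement φ (v, w)| ≤ 4 * Λ * B * ((1 + v ^ γ) * (1 + w ^ γ)) := by
  have hB := hK.bound_nonneg
  have v_le := le_one_add_rpow hK.one_lt.le hv.le
  have w_le := le_one_add_rpow hK.one_lt.le hw.le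
  calc |K v w * coagIncrement φ (v, w)|
      ≤ B * (v ^ γ + w ^ γ) * (2 * Λ * min v w) := by
        rw [abs_mul, abs_of_nonneg (hK.nonneg v w hv hw)]
        gcongr
        exacts [hK.le_mul_add v w hv hw, abs_coagIncrement_le hφ h0 hv.le hw.le]
    _ = 2 * Λ * B * (v ^ γ * min v w + min v w * w ^ γ) := by ring
    _ ≤ 2 * Λ * B * ((1 + v ^ γ) * (1 + w ^ γ) + (1 + v ^ γ) * (1 + w ^ γ)) := by
        gcongr
        exacts [by linarith, (min_le_right v w).trans w_le, (min_le_left v w).trans v_le,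
          by linarith]
    _ = 4 * Λ * B * ((1 + v ^ γ) * (1 + w ^ γ)) := by ring

theorem integrable_mul_coagIncrement (hK : IsSuperlinearKernel K γ B) (hm : HasFiniteMoment γ m)
    (hφ : LipschitzWith Λ φ) (h0 : φ 0 = 0) :
    Integrable (fun p : ℝ × ℝ => K p.1 p.2 * coagIncrement φ p) (m.prod m) := by
  have hφc := hφ.continuous
  have bound_integrable : Integrable
      (fun p : ℝ × ℝ => 4 * Λ * B * ((1 + p.1 ^ γ) * (1 + p.2 ^ γ))) (m.prod m) :=
    (hm.integrable.mul_prod hm.integrable).const_mul _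
  have increment_continuous : Continuous (coagIncrement φ) := by
    unfold coagIncrement
    fun_prop
  refine bound_integrable.mono' ?_ ?_
  · have indicator_mul := hK.measurable_indicator.mul increment_continuous.measurable
    refine indicator_mul.aestronglyMeasurable.congr ?_
    filter_upwards [hm.ae_prod_pos] with p hp
    rw [Pi.mul_apply, indicator_of_mem (show p ∈ Ioi 0 ×ˢ Ioi 0 from hp)]
  · filter_upwards [hm.ae_prod_pos] with p hp
    exact hK.abs_mul_coagIncrement_le hφ h0 hp.1 hp.2

theorem abs_coagIntegral_le (hK : IsSuperlinearKernel K γ B) (hm : HasFiniteMoment γ m)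
    (hφ : LipschitzWith Λ φ) (h0 : φ 0 = 0) :
    |coagIntegral K φ m| ≤ 4 * Λ * B * (∫ v, (1 + v ^ γ) ∂m) ^ 2 := by
  have := hm.isFiniteMeasure
  calc |coagIntegral K φ m|
      ≤ ∫ p, 4 * Λ * B * ((1 + p.1 ^ γ) * (1 + p.2 ^ γ)) ∂m.prod m := by
        rw [← Real.norm_eq_abs]
        refine norm_integral_le_of_norm_le
          ((hm.integrable.mul_prod hm.integrable).const_mul _) ?_
        filter_upwards [hm.ae_prod_pos] with p hp
        exact hK.abs_mul_coagIncrement_le hφ h0 hp.1 hp.2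
    _ = 4 * Λ * B * (∫ v, (1 + v ^ γ) ∂m) ^ 2 := by
        rw [integral_const_mul, integral_prod_mul (fun v : ℝ => 1 + v ^ γ) fun v => 1 + v ^ γ, sq]

theorem integral_le_coagIntegral (hK : IsSuperlinearKernel K γ B) (hm : HasFiniteMoment γ m)
    (hφ : IsLipschitzTest φ) {G : ℝ × ℝ → ℝ} (hG : Integrable G (m.prod m))
    (hle : ∀ v w, 0 < v → 0 < w → G (v, w) ≤ K v w * coagIncrement φ (v, w)) :
    ∫ p, G p ∂m.prod m ≤ coagIntegral K φ m := by
  obtain ⟨Λ, hΛ⟩ := hφ.exists_lipschitzWith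
  refine integral_mono_ae hG (hK.integrable_mul_coagIncrement hm hΛ hφ.map_zero) ?_
  filter_upwards [hm.ae_prod_pos] with p hp
  exact hle p.1 p.2 hp.1 hp.2

theorem neg_mul_integral_le_coagIntegral (hK : IsSuperlinearKernel K γ B)
    (hm : HasFiniteMoment γ m) (hφ : IsLipschitzTest φ) {b : ℝ} (hb : 0 ≤ b)
    (hφb : ∀ v, b ≤ v → φ v = 0) :
    -(2 * B * (1 + b ^ γ) * ∫ v, (1 + v ^ γ) ∂m) * ∫ v, φ v ∂m ≤ coagIntegral K φ m := by
  have := hm.isFiniteMeasure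
  obtain ⟨Λ, hΛ⟩ := hφ.exists_lipschitzWith
  have φ_integrable := integrable_of_lipschitzWith hK.one_lt.le hm hΛ hφ.map_zero
  have loss_le (v w : ℝ) (hv : 0 < v) (hw : 0 < w) :=
    mul_le_mul_of_nonneg_left (rpow_add_rpow_mul_le_of_eq_zero (zero_le_one.trans hK.one_lt.le)
      hφ.nonneg hb hφb hv.le hw.le) hK.bound_nonneg
  let G (p : ℝ × ℝ) : ℝ :=
    -(B * (1 + b ^ γ)) * (φ p.1 * (1 + p.2 ^ γ) + (1 + p.1 ^ γ) * φ p.2)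
  have loss_integrable : Integrable (fun p : ℝ × ℝ => φ p.1 * (1 + p.2 ^ γ)) (m.prod m) :=
    φ_integrable.mul_prod hm.integrable
  have loss_integrable' : Integrable (fun p : ℝ × ℝ => (1 + p.1 ^ γ) * φ p.2) (m.prod m) :=
    hm.integrable.mul_prod φ_integrable
  calc -(2 * B * (1 + b ^ γ) * ∫ v, (1 + v ^ γ) ∂m) * ∫ v, φ v ∂m = ∫ p, G p ∂m.prod m := by
        rw [integral_const_mul, integral_add loss_integrable loss_integrable',
          integral_prod_mul φ fun v : ℝ => 1 + v ^ γ, integral_prod_mul (fun v : ℝ => 1 + v ^ γ) φ]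
        ring
    _ ≤ coagIntegral K φ m := by
        refine hK.integral_le_coagIntegral hm hφ
          ((loss_integrable.add loss_integrable').const_mul _) fun v w hv hw => ?_
        have gain_nonneg := mul_nonneg (hK.nonneg v w hv hw) (hφ.nonneg (v + w))
        have K_le := mul_le_mul_of_nonneg_right (hK.le_mul_add v w hv hw)
          (add_nonneg (hφ.nonneg v) (hφ.nonneg w))
        simp only [G, coagIncrement]
        linarith [loss_le v w hv hw, loss_le w v hw hv]

/-- Where `φ` vanishes `m`-almost everywhere only the gain term `φ (v + w)` is left, and it is
positive near `(x, y)`. -/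
theorem coagIntegral_pos (hK : IsSuperlinearKernel K γ B) (hm : HasFiniteMoment γ m)
    (hφ : IsLipschitzTest φ) (hφm : ∫ v, φ v ∂m = 0) {x y : ℝ} (hx : x ∈ m.support ∩ Ioi 0)
    (hy : y ∈ m.support ∩ Ioi 0) (hxy : x ≠ y) (hφxy : 0 < φ (x + y)) :
    0 < coagIntegral K φ m := by
  have := hm.isFiniteMeasure
  obtain ⟨Λ, hΛ⟩ := hφ.exists_lipschitzWith
  have φ_ae_zero : ∀ᵐ v ∂m, φ v = 0 := (integral_eq_zero_iff_of_nonneg hφ.nonneg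
    (integrable_of_lipschitzWith hK.one_lt.le hm hΛ hφ.map_zero)).1 hφm
  have gain_only : ∀ᵐ p ∂m.prod m, coagIncrement φ p = φ (p.1 + p.2) := by
    filter_upwards [Measure.quasiMeasurePreserving_fst.ae φ_ae_zero,
      Measure.quasiMeasurePreserving_snd.ae φ_ae_zero] with p h₁ h₂
    rw [coagIncrement, h₁, h₂, sub_zero, sub_zero]
  let gainful : Set (ℝ × ℝ) := {p | 0 < p.1 ∧ 0 < p.2 ∧ p.1 ≠ p.2 ∧ 0 < φ (p.1 + p.2)}
  have gainful_pos : 0 < m.prod m gainful := by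
    have isOpen_gainful : IsOpen gainful :=
      (isOpen_lt continuous_const continuous_fst).inter <|
        (isOpen_lt continuous_const continuous_snd).inter <|
          (isOpen_ne_fun continuous_fst continuous_snd).inter <|
            isOpen_lt continuous_const (hφ.continuous.comp continuous_add)
    exact (Measure.mem_support_iff_forall _).1 (mk_mem_support_prod hx.1 hy.1) _ <|
      isOpen_gainful.mem_nhds ⟨hx.2, hy.2, hxy, hφxy⟩
  refine (integral_pos_iff_support_of_nonneg_ae ?_
    (hK.integrable_mul_coagIncrement hm hΛ hφ.map_zero)).2 (gainful_pos.trans_le ?_)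
  · filter_upwards [gain_only, hm.ae_prod_pos] with p hp hpos
    rw [hp]
    exact mul_nonneg (hK.nonneg _ _ hpos.1 hpos.2) (hφ.nonneg _)
  · refine measure_mono_ae ?_
    filter_upwards [gain_only] with p hp hgain
    change K p.1 p.2 * coagIncrement φ p ≠ 0
    rw [hp]
    exact (mul_pos (hK.pos_of_ne _ _ hgain.1 hgain.2.1 hgain.2.2.1) hgain.2.2.2).ne'

end IsSuperlinearKernel
end Kernels

section WeakFormulation

/-- A version of `φ` that is dominated by `φ`, agrees with `φ` at each point for `n` large, vanishes
on `[n, ∞)`, and has a Lipschitz constant independent of `n`. -/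
def cutoff (φ : ℝ → ℝ) (n : ℕ) (v : ℝ) : ℝ := min (φ v) (max 0 (n - v))

variable {K : ℝ → ℝ → ℝ} {γ B T : ℝ} {f : ℝ → Measure ℝ} {fin m : Measure ℝ} {φ : ℝ → ℝ} {Λ : ℝ≥0}

theorem lipschitzWith_cutoff (hφ : LipschitzWith Λ φ) (n : ℕ) :
    LipschitzWith (max Λ 1) (cutoff φ n) := by
  have descent : LipschitzWith 1 fun v : ℝ => (n : ℝ) - v :=
    LipschitzWith.of_dist_le_mul fun v w => by
      rw [dist_sub_left, NNReal.coe_one, one_mul]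
  exact hφ.min (descent.const_max 0)

theorem cutoff_eq_zero_of_le (hφ : ∀ v, 0 ≤ φ v) {n : ℕ} {v : ℝ} (hv : n ≤ v) :
    cutoff φ n v = 0 := by
  rw [cutoff, max_eq_left (sub_nonpos.2 hv), min_eq_right (hφ v)]

theorem eventually_cutoff_eq (φ : ℝ → ℝ) (v : ℝ) : ∀ᶠ n : ℕ in atTop, cutoff φ n v = φ v := by
  filter_upwards [eventually_ge_atTop ⌈φ v + v⌉₊] with n hn
  have := Nat.ceil_le.1 hn
  exact min_eq_left (le_max_of_le_right (by linarith))

theorem IsLipschitzTest.cutoff (hφ : IsLipschitzTest φ) (n : ℕ) : IsLipschitzTest (cutoff φ n) where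
  nonneg v := le_min (hφ.nonneg v) (le_max_left _ _)
  exists_lipschitzWith :=
    have ⟨Λ, hΛ⟩ := hφ.exists_lipschitzWith
    ⟨max Λ 1, lipschitzWith_cutoff hΛ n⟩
  exists_eq_zero_of_le :=
    have ⟨ε, hε, h⟩ := hφ.exists_eq_zero_of_le
    ⟨ε, hε, fun v hv => by rw [_root_.cutoff, h v hv, min_eq_left (le_max_left _ _)]⟩

theorem tendsto_integral_cutoff (hγ : 1 ≤ γ) (hm : HasFiniteMoment γ m) (hφ : IsLipschitzTest φ) :
    Tendsto (fun n => ∫ v, cutoff φ n v ∂m) atTop (𝓝 (∫ v, φ v ∂m)) := by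
  obtain ⟨Λ, hΛ⟩ := hφ.exists_lipschitzWith
  refine tendsto_integral_of_dominated_convergence φ
    (fun n => (hφ.cutoff n).continuous.aestronglyMeasurable)
    (integrable_of_lipschitzWith hγ hm hΛ hφ.map_zero) (fun n => .of_forall fun v => ?_)
    (.of_forall fun v => tendsto_nhds_of_eventually_eq (eventually_cutoff_eq φ v))
  rw [Real.norm_of_nonneg ((hφ.cutoff n).nonneg v)]
  exact min_le_left _ _

theorem tendsto_coagIntegral_cutoff (hK : IsSuperlinearKernel K γ B) (hm : HasFiniteMoment γ m)
    (hφ : IsLipschitzTest φ) :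
    Tendsto (fun n => coagIntegral K (cutoff φ n) m) atTop (𝓝 (coagIntegral K φ m)) := by
  obtain ⟨Λ, hΛ⟩ := hφ.exists_lipschitzWith
  refine tendsto_integral_of_dominated_convergence
    (fun p => 4 * max Λ 1 * B * ((1 + p.1 ^ γ) * (1 + p.2 ^ γ)))
    (fun n => (hK.integrable_mul_coagIncrement hm (lipschitzWith_cutoff hΛ n)
      (hφ.cutoff n).map_zero).aestronglyMeasurable)
    ((hm.integrable.mul_prod hm.integrable).const_mul _) (fun n => ?_) (.of_forall fun p => ?_)
  · filter_upwards [hm.ae_prod_pos] with p hp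
    exact_mod_cast hK.abs_mul_coagIncrement_le (lipschitzWith_cutoff hΛ n) (hφ.cutoff n).map_zero
      hp.1 hp.2
  · refine tendsto_nhds_of_eventually_eq ?_
    filter_upwards [eventually_cutoff_eq φ p.1, eventually_cutoff_eq φ p.2,
      eventually_cutoff_eq φ (p.1 + p.2)] with n h₁ h₂ h₁₂
    rw [coagIncrement, coagIncrement, h₁, h₂, h₁₂]

namespace IsWeakSolution

theorem hasFiniteMoment (hf : IsWeakSolution K γ T f fin) {t : ℝ} (ht : t ∈ Icc 0 T) :
    HasFiniteMoment γ (f t) :=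
  have ⟨_, hC⟩ := hf.moment_bound
  ⟨hf.conc t ht, (hC t ht).1⟩

theorem aestronglyMeasurable_coagIntegral (hf : IsWeakSolution K γ T f fin)
    (hK : IsSuperlinearKernel K γ B) (hφ : Continuous φ) :
    AEStronglyMeasurable (fun t => coagIntegral K φ (f t)) (volume.restrict (Icc 0 T)) := by
  obtain ⟨C, hC⟩ := hf.moment_bound
  let μ (t : Icc 0 T) : Measure ℝ := f t
  have moment (t : Icc 0 T) : HasFiniteMoment γ (μ t) := hf.hasFiniteMoment t.2
  have (t : Icc 0 T) : IsFiniteMeasure (μ t) := (moment t).isFiniteMeasure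
  have measurable_μ : Measurable μ := measurable_of_measurable_integral fun ψ hψ hbdd =>
    (continuousOn_iff_continuous_domRestrict.1 (hf.time_cont ψ hψ hbdd)).measurable
  have mass_le (t : Icc 0 T) : μ t univ ≤ C.toNNReal :=
    (moment t).measure_univ_le.trans (ENNReal.ofReal_le_ofReal (hC t t.2).2)
  have increment_measurable : Measurable (coagIncrement φ) := by
    unfold coagIncrement
    fun_prop
  have key := measurable_integral_prod_self measurable_μ mass_le
    (hK.measurable_indicator.mul increment_measurable)
  refine (aemeasurable_restrict_of_measurable_subtype measurableSet_Icc ?_).aestronglyMeasurable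
  convert key using 2 with t
  refine integral_congr_ae ?_
  filter_upwards [(moment t).ae_prod_pos] with p hp
  rw [Pi.mul_apply, indicator_of_mem (show p ∈ Ioi 0 ×ˢ Ioi 0 from hp)]

theorem exists_abs_coagIntegral_le (hf : IsWeakSolution K γ T f fin)
    (hK : IsSuperlinearKernel K γ B) (Λ : ℝ≥0) :
    ∃ M, ∀ φ, LipschitzWith Λ φ → φ 0 = 0 → ∀ t ∈ Icc 0 T, |coagIntegral K φ (f t)| ≤ M := by
  obtain ⟨C, hC⟩ := hf.moment_bound
  refine ⟨4 * Λ * B * C ^ 2, fun φ hφ h0 t ht => ?_⟩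
  have hm := hf.hasFiniteMoment ht
  have := hK.bound_nonneg
  have := hm.integral_nonneg
  calc |coagIntegral K φ (f t)| ≤ 4 * Λ * B * (∫ v, (1 + v ^ γ) ∂f t) ^ 2 :=
        hK.abs_coagIntegral_le hm hφ h0
    _ ≤ 4 * Λ * B * C ^ 2 := by
        gcongr
        exact (hC t ht).2

theorem intervalIntegrable_coagIntegral (hf : IsWeakSolution K γ T f fin)
    (hK : IsSuperlinearKernel K γ B) (hφ : IsLipschitzTest φ) {s t : ℝ} (hs : s ∈ Icc 0 T)
    (ht : t ∈ Icc 0 T) :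
    IntervalIntegrable (fun r => coagIntegral K φ (f r)) volume s t := by
  obtain ⟨Λ, hΛ⟩ := hφ.exists_lipschitzWith
  obtain ⟨M, hM⟩ := hf.exists_abs_coagIntegral_le hK Λ
  have on_Icc : IntegrableOn (fun r => coagIntegral K φ (f r)) (Icc 0 T) :=
    .of_bound measure_Icc_lt_top (hf.aestronglyMeasurable_coagIntegral hK hφ.continuous) M
      ((ae_restrict_mem measurableSet_Icc).mono fun r hr => hM φ hΛ hφ.map_zero r hr)
  exact (on_Icc.mono_set (ordConnected_Icc.uIcc_subset hs ht)).intervalIntegrable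

theorem integral_sub_integral_fin (hf : IsWeakSolution K γ T f fin)
    (hK : IsSuperlinearKernel K γ B) (hφ : IsLipschitzTest φ) {b : ℝ} (hφb : ∀ v, b ≤ v → φ v = 0)
    {t : ℝ} (ht : t ∈ Icc 0 T) :
    ∫ v, φ v ∂f t - ∫ v, φ v ∂fin = 1 / 2 * ∫ r in 0..t, coagIntegral K φ (f r) := by
  obtain ⟨Λ, hΛ⟩ := hφ.exists_lipschitzWith
  obtain ⟨ε, hε, hφε⟩ := hφ.exists_eq_zero_of_le
  have support_subset : Function.support φ ⊆ Icc ε b := fun v hv =>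
    ⟨le_of_not_ge fun h => hv (hφε v h), le_of_not_ge fun h => hv (hφb v h)⟩
  rw [hf.weak_form φ hφ.continuous
    (.of_support_subset_isCompact isCompact_Icc support_subset)
    ((closure_minimal support_subset isClosed_Icc).trans fun v hv => hε.trans_le hv.1) t ht]
  congr 1
  refine intervalIntegral.integral_congr fun r hr => ?_
  rw [uIcc_of_le ht.1] at hr
  have hm := hf.hasFiniteMoment ⟨hr.1, hr.2.trans ht.2⟩
  have := hm.isFiniteMeasure
  exact (integral_prod _ (hK.integrable_mul_coagIncrement hm hΛ hφ.map_zero)).symm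

theorem integral_zero_eq (hf : IsWeakSolution K γ T f fin) (hT : 0 ≤ T)
    (hK : IsSuperlinearKernel K γ B) (hφ : IsLipschitzTest φ) {b : ℝ}
    (hφb : ∀ v, b ≤ v → φ v = 0) : ∫ v, φ v ∂f 0 = ∫ v, φ v ∂fin := by
  have h := hf.integral_sub_integral_fin hK hφ hφb (left_mem_Icc.2 hT)
  rwa [intervalIntegral.integral_same, mul_zero, sub_eq_zero] at h

theorem integral_sub_integral_of_eq_zero (hf : IsWeakSolution K γ T f fin)
    (hK : IsSuperlinearKernel K γ B) (hφ : IsLipschitzTest φ) {b : ℝ} (hφb : ∀ v, b ≤ v → φ v = 0)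
    {s t : ℝ} (hs : s ∈ Icc 0 T) (ht : t ∈ Icc 0 T) :
    ∫ v, φ v ∂f t - ∫ v, φ v ∂f s = 1 / 2 * ∫ r in s..t, coagIntegral K φ (f r) := by
  have zero_mem : (0 : ℝ) ∈ Icc 0 T := ⟨le_rfl, ht.1.trans ht.2⟩
  rw [← intervalIntegral.integral_interval_sub_left
    (hf.intervalIntegrable_coagIntegral hK hφ zero_mem ht)
    (hf.intervalIntegrable_coagIntegral hK hφ zero_mem hs), mul_sub,
    ← hf.integral_sub_integral_fin hK hφ hφb ht, ← hf.integral_sub_integral_fin hK hφ hφb hs,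
    sub_sub_sub_cancel_right]

theorem integral_sub_integral (hf : IsWeakSolution K γ T f fin)
    (hK : IsSuperlinearKernel K γ B) (hφ : IsLipschitzTest φ) {s t : ℝ} (hs : s ∈ Icc 0 T)
    (ht : t ∈ Icc 0 T) :
    ∫ v, φ v ∂f t - ∫ v, φ v ∂f s = 1 / 2 * ∫ r in s..t, coagIntegral K φ (f r) := by
  have truncated (n : ℕ) := hf.integral_sub_integral_of_eq_zero hK (hφ.cutoff n)
    (fun _ => cutoff_eq_zero_of_le hφ.nonneg) hs ht
  obtain ⟨Λ, hΛ⟩ := hφ.exists_lipschitzWith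
  obtain ⟨M, hM⟩ := hf.exists_abs_coagIntegral_le hK (max Λ 1)
  have mem_Icc {r : ℝ} (hr : r ∈ uIoc s t) : r ∈ Icc 0 T :=
    ordConnected_Icc.uIcc_subset hs ht (uIoc_subset_uIcc hr)
  have rate_tendsto : Tendsto (fun n => ∫ r in s..t, coagIntegral K (cutoff φ n) (f r)) atTop
      (𝓝 (∫ r in s..t, coagIntegral K φ (f r))) :=
    intervalIntegral.tendsto_integral_filter_of_dominated_convergence (fun _ => M)
      (.of_forall fun n =>
        (hf.intervalIntegrable_coagIntegral hK (hφ.cutoff n) hs ht).def'.aestronglyMeasurable)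
      (.of_forall fun n => .of_forall fun r hr =>
        hM _ (lipschitzWith_cutoff hΛ n) (hφ.cutoff n).map_zero r (mem_Icc hr))
      intervalIntegrable_const
      (.of_forall fun r hr => tendsto_coagIntegral_cutoff hK (hf.hasFiniteMoment (mem_Icc hr)) hφ)
  refine tendsto_nhds_unique ?_ (rate_tendsto.const_mul (1 / 2))
  simpa only [truncated] using
    (tendsto_integral_cutoff hK.one_lt.le (hf.hasFiniteMoment ht) hφ).sub
      (tendsto_integral_cutoff hK.one_lt.le (hf.hasFiniteMoment hs) hφ)

theorem continuousOn_integral (hf : IsWeakSolution K γ T f fin)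
    (hK : IsSuperlinearKernel K γ B) (hφ : IsLipschitzTest φ) :
    ContinuousOn (fun t => ∫ v, φ v ∂f t) (Icc 0 T) := by
  rcases lt_or_ge T 0 with hT | hT
  · simp [Icc_eq_empty_of_lt hT]
  have zero_mem : (0 : ℝ) ∈ Icc 0 T := left_mem_Icc.2 hT
  have primitive := intervalIntegral.continuousOn_primitive_interval'
    (hf.intervalIntegrable_coagIntegral hK hφ zero_mem (right_mem_Icc.2 hT)) left_mem_uIcc
  rw [uIcc_of_le hT] at primitive
  refine ((primitive.const_mul (1 / 2)).const_add (∫ v, φ v ∂f 0)).congr fun t ht => ?_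
  exact eq_add_of_sub_eq' (hf.integral_sub_integral hK hφ zero_mem ht)

theorem integral_mul_exp_le (hf : IsWeakSolution K γ T f fin) (hK : IsSuperlinearKernel K γ B)
    (hφ : IsLipschitzTest φ) {c s t : ℝ} (hs : 0 ≤ s) (hst : s ≤ t) (ht : t ≤ T)
    (hc : ∀ r ∈ Icc s t, c * ∫ v, φ v ∂f r ≤ coagIntegral K φ (f r)) :
    (∫ v, φ v ∂f s) * Real.exp (c / 2 * (t - s)) ≤ ∫ v, φ v ∂f t := by
  have cont := (hf.continuousOn_integral hK hφ).mono (Icc_subset_Icc hs ht)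
  refine mul_exp_le_of_mul_integral_le_sub hst cont fun s' t' hs' hst' ht' => ?_
  have hs'T : s' ∈ Icc 0 T := ⟨hs.trans hs', by linarith⟩
  have ht'T : t' ∈ Icc 0 T := ⟨by linarith, ht'.trans ht⟩
  have integrable : IntervalIntegrable (fun r => ∫ v, φ v ∂f r) volume s' t' :=
    (cont.mono (Icc_subset_Icc hs' ht')).intervalIntegrable_of_Icc hst'
  calc c / 2 * ∫ r in s'..t', ∫ v, φ v ∂f r = 1 / 2 * ∫ r in s'..t', c * ∫ v, φ v ∂f r := by
        rw [intervalIntegral.integral_const_mul]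
        ring
    _ ≤ 1 / 2 * ∫ r in s'..t', coagIntegral K φ (f r) := by
        gcongr
        exact intervalIntegral.integral_mono_on hst' (integrable.const_mul c)
          (hf.intervalIntegrable_coagIntegral hK hφ hs'T ht'T)
          fun r hr => hc r ⟨hs'.trans hr.1, hr.2.trans ht'⟩
    _ = ∫ v, φ v ∂f t' - ∫ v, φ v ∂f s' := (hf.integral_sub_integral hK hφ hs'T ht'T).symm

theorem exists_pos_mul_integral_le (hf : IsWeakSolution K γ T f fin)
    (hK : IsSuperlinearKernel K γ B) (hφ : IsLipschitzTest φ) {b : ℝ} (hb : 0 ≤ b)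
    (hφb : ∀ v, b ≤ v → φ v = 0) :
    ∃ c > 0, ∀ s t, 0 ≤ s → s ≤ t → t ≤ T → c * ∫ v, φ v ∂f s ≤ ∫ v, φ v ∂f t := by
  obtain ⟨C, hC⟩ := hf.moment_bound
  have hB := hK.bound_nonneg
  have := Real.rpow_nonneg hb γ
  have integral_nonneg (r : ℝ) : 0 ≤ ∫ v, φ v ∂f r := integral_nonneg hφ.nonneg
  refine ⟨Real.exp (-(2 * B * (1 + b ^ γ) * C) / 2 * T), Real.exp_pos _, fun s t hs hst ht => ?_⟩
  have C_nonneg : 0 ≤ C :=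
    (hf.hasFiniteMoment ⟨hs, hst.trans ht⟩).integral_nonneg.trans (hC s ⟨hs, hst.trans ht⟩).2
  have loss (r : ℝ) (hr : r ∈ Icc s t) :
      -(2 * B * (1 + b ^ γ) * C) * ∫ v, φ v ∂f r ≤ coagIntegral K φ (f r) := by
    have hrT : r ∈ Icc 0 T := ⟨hs.trans hr.1, hr.2.trans ht⟩
    refine le_trans ?_ (hK.neg_mul_integral_le_coagIntegral (hf.hasFiniteMoment hrT) hφ hb hφb)
    gcongr
    exacts [integral_nonneg r, (hC r hrT).2]
  refine le_trans ?_ (hf.integral_mul_exp_le hK hφ hs hst ht loss)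
  rw [mul_comm, neg_div, neg_mul, neg_mul]
  gcongr
  exacts [integral_nonneg s, by linarith]

end IsWeakSolution
end WeakFormulation

section Supports

/-- The tent function of height `ε` over the interval `(x - ε, x + ε)`. -/
def tent (x ε v : ℝ) : ℝ := max 0 (ε - |v - x|)

variable {K : ℝ → ℝ → ℝ} {γ B T : ℝ} {f : ℝ → Measure ℝ} {fin : Measure ℝ} {x y ε v : ℝ}

theorem tent_nonneg : 0 ≤ tent x ε v := le_max_left _ _

theorem tent_le (hε : 0 ≤ ε) : tent x ε v ≤ ε :=
  max_le hε (sub_le_self _ (abs_nonneg _))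

theorem tent_pos_iff : 0 < tent x ε v ↔ v ∈ Metric.ball x ε := by
  simp [tent, Real.dist_eq]

theorem tent_eq_zero_iff : tent x ε v = 0 ↔ v ∉ Metric.ball x ε := by
  rw [← tent_pos_iff, not_lt, tent_nonneg.ge_iff_eq']

theorem lipschitzWith_tent (x ε : ℝ) : LipschitzWith 1 (tent x ε) := by
  refine LipschitzWith.const_max (LipschitzWith.of_le_add fun v w => ?_) 0
  rw [Real.dist_eq]
  linarith [abs_sub_le w v x, abs_sub_comm v w]

theorem tent_eq_zero_of_add_le (hv : x + ε ≤ v) : tent x ε v = 0 :=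
  max_eq_left (by linarith [le_abs_self (v - x)])

theorem isLipschitzTest_tent (hεx : ε < x) : IsLipschitzTest (tent x ε) where
  nonneg _ := tent_nonneg
  exists_lipschitzWith := ⟨1, lipschitzWith_tent x ε⟩
  exists_eq_zero_of_le :=
    ⟨x - ε, sub_pos.2 hεx, fun v hv => max_eq_left (by linarith [neg_abs_le (v - x)])⟩

theorem integral_tent_pos_iff {m : Measure ℝ} [IsFiniteMeasureOnCompacts m] :
    0 < ∫ v, tent x ε v ∂m ↔ 0 < m (Metric.ball x ε) := by
  have support_eq : Function.support (tent x ε) = Metric.ball x ε := by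
    ext v
    rw [Function.mem_support, ne_eq, tent_eq_zero_iff, not_not]
  rw [integral_pos_iff_support_of_nonneg (fun _ => tent_nonneg), support_eq]
  refine (lipschitzWith_tent x ε).continuous.integrable_of_hasCompactSupport ?_
  exact .of_support_subset_isCompact (isCompact_closedBall x ε)
    (support_eq.trans_subset Metric.ball_subset_closedBall)

theorem integral_tent_le {m : Measure ℝ} [IsFiniteMeasure m] (hε : 0 ≤ ε) :
    ∫ v, tent x ε v ∂m ≤ ε * m.real (Icc (x - ε) (x + ε)) := by
  rw [← Real.closedBall_eq_Icc, ← setIntegral_eq_integral_of_forall_compl_eq_zero fun v hv =>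
    tent_eq_zero_iff.2 fun h => hv (Metric.ball_subset_closedBall h)]
  refine (Real.le_norm_self _).trans
    (norm_setIntegral_le_of_norm_le_const (measure_lt_top m _) fun v _ => ?_)
  rw [Real.norm_of_nonneg tent_nonneg]
  exact tent_le hε

theorem integral_tent_pos_of_mem_support {m : Measure ℝ} [IsFiniteMeasureOnCompacts m]
    (hx : x ∈ m.support) (hε : 0 < ε) : 0 < ∫ v, tent x ε v ∂m :=
  integral_tent_pos_iff.2 ((Measure.mem_support_iff_forall x).1 hx _ (Metric.ball_mem_nhds x hε))

theorem mem_support_of_integral_tent_pos {m : Measure ℝ} [IsFiniteMeasureOnCompacts m] (hx : 0 < x)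
    (h : ∀ ε, 0 < ε → ε < x → 0 < ∫ v, tent x ε v ∂m) : x ∈ m.support := by
  refine (Measure.mem_support_iff_forall x).2 fun U hU => ?_
  obtain ⟨ε, hε, hεU⟩ := Metric.mem_nhds_iff.1 hU
  have ball_subset : Metric.ball x (min ε (x / 2)) ⊆ U :=
    (Metric.ball_subset_ball (min_le_left _ _)).trans hεU
  refine (integral_tent_pos_iff.1 (h _ (lt_min hε (half_pos hx)) ?_)).trans_le
    (measure_mono ball_subset)
  exact (min_le_right _ _).trans_lt (half_lt_self hx)

namespace IsWeakSolution

theorem exists_pos_mul_integral_tent_le (hf : IsWeakSolution K γ T f fin)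
    (hK : IsSuperlinearKernel K γ B) (hε : 0 < ε) (hεx : ε < x) :
    ∃ c > 0, ∀ s t, 0 ≤ s → s ≤ t → t ≤ T → c * ∫ v, tent x ε v ∂f s ≤ ∫ v, tent x ε v ∂f t :=
  hf.exists_pos_mul_integral_le hK (isLipschitzTest_tent hεx) (by linarith : 0 ≤ x + ε)
    fun _ => tent_eq_zero_of_add_le

theorem support_mono (hf : IsWeakSolution K γ T f fin) (hK : IsSuperlinearKernel K γ B) {s t : ℝ}
    (hs : 0 ≤ s) (hst : s ≤ t) (ht : t ≤ T) : (f s).support ∩ Ioi 0 ⊆ (f t).support := by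
  intro x hx
  have := (hf.hasFiniteMoment ⟨hs, hst.trans ht⟩).isFiniteMeasure
  have := (hf.hasFiniteMoment ⟨hs.trans hst, ht⟩).isFiniteMeasure
  refine mem_support_of_integral_tent_pos hx.2 fun ε hε hεx => ?_
  obtain ⟨c, hc, hle⟩ := hf.exists_pos_mul_integral_tent_le hK hε hεx
  exact (mul_pos hc (integral_tent_pos_of_mem_support hx.1 hε)).trans_le (hle s t hs hst ht)

theorem support_fin_subset (hf : IsWeakSolution K γ T f fin) (hK : IsSuperlinearKernel K γ B)
    [IsFiniteMeasureOnCompacts fin] {t : ℝ} (ht : t ∈ Icc 0 T) :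
    fin.support ∩ Ioi 0 ⊆ (f t).support := by
  intro x hx
  have hT : 0 ≤ T := ht.1.trans ht.2
  have := (hf.hasFiniteMoment (left_mem_Icc.2 hT)).isFiniteMeasure
  refine hf.support_mono hK le_rfl ht.1 ht.2 ⟨?_, hx.2⟩
  refine mem_support_of_integral_tent_pos hx.2 fun ε hε hεx => ?_
  rw [hf.integral_zero_eq hT hK (isLipschitzTest_tent hεx) fun _ => tent_eq_zero_of_add_le]
  exact integral_tent_pos_of_mem_support hx.1 hε

/-- If no mass reached `x + y` by time `t`, then none was there on `(s, t]` either, while particles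
near `x` and `y` kept merging at a positive rate. -/
theorem add_mem_support (hf : IsWeakSolution K γ T f fin) (hK : IsSuperlinearKernel K γ B) {s t : ℝ}
    (hs : 0 ≤ s) (hst : s < t) (ht : t ≤ T) (hx : x ∈ (f s).support ∩ Ioi 0)
    (hy : y ∈ (f s).support ∩ Ioi 0) (hxy : x ≠ y) : x + y ∈ (f t).support := by
  have mem_Icc {r : ℝ} (hr : r ∈ Icc s t) : r ∈ Icc 0 T := ⟨hs.trans hr.1, hr.2.trans ht⟩
  have hsT := mem_Icc (left_mem_Icc.2 hst.le)
  have htT := mem_Icc (right_mem_Icc.2 hst.le)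
  have := (hf.hasFiniteMoment htT).isFiniteMeasure
  refine mem_support_of_integral_tent_pos (add_pos hx.2 hy.2) fun ε hε hεxy => ?_
  have test := isLipschitzTest_tent hεxy
  by_contra! h_le
  obtain ⟨c, hc, persists⟩ := hf.exists_pos_mul_integral_tent_le hK hε hεxy
  have vanishes (r : ℝ) (hr : r ∈ Icc s t) : ∫ v, tent (x + y) ε v ∂f r = 0 := by
    have h_nonneg : 0 ≤ ∫ v, tent (x + y) ε v ∂f r := integral_nonneg test.nonneg
    nlinarith [persists r t (hs.trans hr.1) hr.2 ht]
  have rate_pos : 0 < ∫ r in s..t, coagIntegral K (tent (x + y) ε) (f r) := by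
    refine intervalIntegral.intervalIntegral_pos_of_pos_on
      (hf.intervalIntegrable_coagIntegral hK test hsT htT) (fun r hr => ?_) hst
    have hr := Ioo_subset_Icc_self hr
    have still_mem {z : ℝ} (hz : z ∈ (f s).support ∩ Ioi 0) : z ∈ (f r).support ∩ Ioi 0 :=
      ⟨hf.support_mono hK hs hr.1 (mem_Icc hr).2 hz, hz.2⟩
    exact hK.coagIntegral_pos (hf.hasFiniteMoment (mem_Icc hr)) test (vanishes r hr) (still_mem hx)
      (still_mem hy) hxy (tent_pos_iff.2 (Metric.mem_ball_self hε))
  have balance := hf.integral_sub_integral hK test hsT htT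
  rw [vanishes s (left_mem_Icc.2 hst.le), vanishes t (right_mem_Icc.2 hst.le)] at balance
  linarith

theorem nat_mul_add_mem_support (hf : IsWeakSolution K γ T f fin) (hK : IsSuperlinearKernel K γ B)
    [IsFiniteMeasureOnCompacts fin] (hx : x ∈ fin.support ∩ Ioi 0) (hy : y ∈ fin.support ∩ Ioi 0)
    (hxy : x < y) (n : ℕ) : ∀ t ∈ Ioc 0 T, n * x + y ∈ (f t).support := by
  have x_pos : 0 < x := hx.2
  induction n with
  | zero =>
    intro t ht
    simpa using hf.support_fin_subset hK (Ioc_subset_Icc_self ht) hy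
  | succ n ih =>
    intro t ht
    have half_mem : t / 2 ∈ Ioc 0 T := ⟨half_pos ht.1, (half_le_self ht.1.le).trans ht.2⟩
    have x_lt : x < n * x + y := by linarith [(by positivity : 0 ≤ (n : ℝ) * x)]
    have h := hf.add_mem_support hK half_mem.1.le (half_lt_self ht.1) ht.2
      ⟨hf.support_fin_subset hK (Ioc_subset_Icc_self half_mem) hx, hx.2⟩
      ⟨ih _ half_mem, x_pos.trans x_lt⟩ x_lt.ne
    rwa [Nat.cast_succ, add_one_mul, add_comm (n * x) x, add_assoc]

theorem measure_Ici_pos (hf : IsWeakSolution K γ T f fin) (hK : IsSuperlinearKernel K γ B)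
    [IsFiniteMeasureOnCompacts fin] (hfin : (fin.support ∩ Ioi 0).Nontrivial) {t : ℝ}
    (ht : t ∈ Ioc 0 T) (L : ℝ) : 0 < f t (Ici L) := by
  obtain ⟨x, hx, y, hy, hxy⟩ := hfin.exists_lt
  have x_pos : 0 < x := hx.2
  have : 0 < y := hy.2
  obtain ⟨n, hn⟩ := exists_nat_gt (L / x)
  have hL : L < n * x + y := by
    rw [div_lt_iff₀ x_pos] at hn
    linarith
  exact (Measure.mem_support_iff_forall _).1 (hf.nat_mul_add_mem_support hK hx hy hxy n t ht) _
    (Ici_mem_nhds hL)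

end IsWeakSolution
end Supports

section TailTest

theorem min_one_mul_le_one_sub_rpow {x β : ℝ} (hβ : 0 ≤ β) (hx₀ : 0 ≤ x) (hx₁ : x ≤ 1) :
    min 1 β * (1 - x) ≤ 1 - x ^ β := by
  rcases le_total 1 β with h | h
  · have := Real.rpow_le_rpow_of_exponent_ge' hx₀ hx₁ zero_le_one h
    rw [Real.rpow_one] at this
    rw [min_eq_left h]
    linarith
  · have := rpow_one_add_le_one_add_mul_self (by linarith : -1 ≤ x - 1) hβ h
    rw [add_sub_cancel] at this
    rw [min_eq_right h]
    linarith

theorem one_sub_rpow_le_max_one_mul {x β : ℝ} (hβ : 0 ≤ β) (hx₀ : 0 ≤ x) (hx₁ : x ≤ 1) :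
    1 - x ^ β ≤ max 1 β * (1 - x) := by
  rcases le_total 1 β with h | h
  · have := one_add_mul_self_le_rpow_one_add (by linarith : -1 ≤ x - 1) h
    rw [add_sub_cancel] at this
    rw [max_eq_right h]
    linarith
  · have := Real.rpow_le_rpow_of_exponent_ge' hx₀ hx₁ hβ h
    rw [Real.rpow_one] at this
    rw [max_eq_left h]
    linarith

theorem nat_mul_pow_mul_sub_le {a b : ℝ} (ha : 0 ≤ a) (ha₁ : a ≤ 1) (hab : a ≤ b) (N : ℕ) :
    N * a ^ N * (b - a) ≤ b ^ N - a ^ N := by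
  induction N with
  | zero => simp
  | succ N ih =>
    have : 0 ≤ b := ha.trans hab
    calc (N + 1 : ℕ) * a ^ (N + 1) * (b - a)
        = a * (N * a ^ N * (b - a)) + a ^ (N + 1) * (b - a) := by
          push_cast
          ring
      _ ≤ a * (b ^ N - a ^ N) + b ^ N * (b - a) := by
          have pow_le : a ^ (N + 1) ≤ b ^ N :=
            (pow_le_pow_of_le_one ha ha₁ N.le_succ).trans (pow_le_pow_left₀ ha hab N)
          gcongr
      _ = b ^ (N + 1) - a ^ (N + 1) := by ring

/-- A weight that vanishes on `(-∞, R]` and tends to `1` at infinity, slowly enough that its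
increments from `v` to `v + w` are of order `v ^ (-(β + 1))` for `w` in a compact interval: with
`β = γ - 1` the superlinear kernel compensates them. The `max` only encodes the vanishing. -/
def tailWeight (R β v : ℝ) : ℝ := 1 - (R / max R v) ^ β

/-- The mass beyond `R`, counted with the `N`-th power of `tailWeight`. The growth rate of its
integral is proportional to `N`. -/
def tailTest (R β : ℝ) (N : ℕ) (v : ℝ) : ℝ := v * tailWeight R β v ^ N

variable {R β v w x y : ℝ} {N : ℕ}

theorem tailWeight_of_le (hR : 0 < R) (hv : v ≤ R) : tailWeight R β v = 0 := by
  simp [tailWeight, max_eq_left hv, hR.ne']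

theorem tailWeight_of_ge (hv : R ≤ v) : tailWeight R β v = 1 - (R / v) ^ β := by
  rw [tailWeight, max_eq_right hv]

theorem tailWeight_mono (hR : 0 < R) (hβ : 0 ≤ β) : Monotone (tailWeight R β) := by
  intro x y hxy
  have : 0 < max R x := lt_max_of_lt_left hR
  unfold tailWeight
  gcongr

theorem tailWeight_nonneg (hR : 0 < R) (hβ : 0 ≤ β) : 0 ≤ tailWeight R β v :=
  (tailWeight_of_le hR (min_le_left R v)).ge.trans (tailWeight_mono hR hβ (min_le_right R v))

theorem tailWeight_le_one (hR : 0 < R) : tailWeight R β v ≤ 1 :=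
  sub_le_self _ (Real.rpow_nonneg (div_nonneg hR.le (le_max_of_le_left hR.le)) _)

theorem tendsto_tailWeight (hβ : 0 < β) : Tendsto (tailWeight R β) atTop (𝓝 1) := by
  have max_atTop : Tendsto (max R) atTop atTop :=
    tendsto_atTop_mono (le_max_right R) tendsto_id
  have h := ((max_atTop.const_div_atTop R).rpow_const (.inr hβ.le)).const_sub 1
  rwa [Real.zero_rpow hβ.ne', sub_zero] at h

theorem tailWeight_sub (hR : 0 < R) (hx : R ≤ x) (hxy : x ≤ y) :
    tailWeight R β y - tailWeight R β x = (R / x) ^ β * (1 - (x / y) ^ β) := by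
  have hx₀ := hR.trans_le hx
  have hy₀ := hx₀.trans_le hxy
  rw [tailWeight_of_ge hx, tailWeight_of_ge (hx.trans hxy), mul_sub, mul_one,
    ← Real.mul_rpow (by positivity) (by positivity), div_mul_div_cancel₀ hx₀.ne']
  ring

theorem mul_tailWeight_sub_le (hR : 0 < R) (hβ : 0 ≤ β) (hx : R ≤ x) (hxy : x ≤ y) :
    x * (tailWeight R β y - tailWeight R β x) ≤ max 1 β * (y - x) := by
  have hx₀ := hR.trans_le hx
  have hy₀ := hx₀.trans_le hxy
  have ratio_le : x / y ≤ 1 := div_le_one_of_le₀ hxy hy₀.le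
  have pow_le : (R / x) ^ β ≤ 1 :=
    Real.rpow_le_one (by positivity) (div_le_one_of_le₀ hx hx₀.le) hβ
  have drop_nonneg : 0 ≤ 1 - (x / y) ^ β :=
    sub_nonneg.2 (Real.rpow_le_one (by positivity) ratio_le hβ)
  calc x * (tailWeight R β y - tailWeight R β x) = x * ((R / x) ^ β * (1 - (x / y) ^ β)) := by
        rw [tailWeight_sub hR hx hxy]
    _ ≤ y * (1 * (max 1 β * (1 - x / y))) := by
        gcongr
        exact one_sub_rpow_le_max_one_mul hβ (by positivity) ratio_le
    _ = max 1 β * (y - x) := by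
        field_simp

theorem le_rpow_mul_tailWeight_sub (hR : 0 < R) (hβ : 0 ≤ β) (hv : R ≤ v) {a : ℝ} (ha : 0 ≤ a)
    (haw : a ≤ w) (hwR : w ≤ R) :
    R ^ β * min 1 β * (a / 2) ≤ v ^ (β + 1) * (tailWeight R β (v + w) - tailWeight R β v) := by
  have hv₀ := hR.trans_le hv
  have hw₀ := ha.trans haw
  have hvw : v ≤ v + w := le_add_of_nonneg_right hw₀
  have hsum : 0 < v + w := hv₀.trans_le hvw
  have : 0 ≤ min 1 β := le_min zero_le_one hβ
  calc R ^ β * min 1 β * (a / 2) ≤ R ^ β * min 1 β * (v * (1 - v / (v + w))) := by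
        gcongr
        rw [one_sub_div hsum.ne', add_sub_cancel_left, mul_div_assoc', div_le_div_iff₀ two_pos hsum]
        nlinarith
    _ = R ^ β * v * (min 1 β * (1 - v / (v + w))) := by ring
    _ ≤ R ^ β * v * (1 - (v / (v + w)) ^ β) := by
        gcongr
        exact min_one_mul_le_one_sub_rpow hβ (by positivity) (div_le_one_of_le₀ hvw hsum.le)
    _ = v ^ (β + 1) * (tailWeight R β (v + w) - tailWeight R β v) := by
        rw [tailWeight_sub hR hv hvw, Real.div_rpow hR.le hv₀.le, Real.rpow_add_one hv₀.ne']
        field_simp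

theorem tailTest_of_le (hR : 0 < R) (hN : N ≠ 0) (hv : v ≤ R) : tailTest R β N v = 0 := by
  rw [tailTest, tailWeight_of_le hR hv, zero_pow hN, mul_zero]

theorem tailTest_nonneg (hR : 0 < R) (hβ : 0 ≤ β) (hv : 0 ≤ v) : 0 ≤ tailTest R β N v :=
  mul_nonneg hv (pow_nonneg (tailWeight_nonneg hR hβ) N)

theorem tailTest_le_self (hR : 0 < R) (hβ : 0 ≤ β) (hv : 0 ≤ v) : tailTest R β N v ≤ v :=
  mul_le_of_le_one_right hv (pow_le_one₀ (tailWeight_nonneg hR hβ) (tailWeight_le_one hR))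

theorem tailTest_mono (hR : 0 < R) (hβ : 0 ≤ β) (hx : R ≤ x) (hxy : x ≤ y) :
    tailTest R β N x ≤ tailTest R β N y := by
  have hy₀ := (hR.trans_le hx).trans_le hxy
  have := tailWeight_nonneg (v := x) hR hβ
  have := tailWeight_mono hR hβ hxy
  unfold tailTest
  gcongr

theorem tailTest_sub_le (hR : 0 < R) (hβ : 0 ≤ β) (hx : R ≤ x) (hxy : x ≤ y) :
    tailTest R β N y - tailTest R β N x ≤ (1 + N * max 1 β) * (y - x) := by
  have hx₀ := hR.trans_le hx
  have weight_nonneg (z : ℝ) : 0 ≤ tailWeight R β z := tailWeight_nonneg hR hβ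
  have weight_le_one (z : ℝ) : tailWeight R β z ≤ 1 := tailWeight_le_one hR
  have pow_sub_le : tailWeight R β y ^ N - tailWeight R β x ^ N
      ≤ N * (tailWeight R β y - tailWeight R β x) := by
    have max_le_one : max |tailWeight R β y| |tailWeight R β x| ≤ 1 := by
      simp only [abs_of_nonneg, weight_nonneg, weight_le_one, max_le_iff, and_self]
    calc tailWeight R β y ^ N - tailWeight R β x ^ N
        ≤ |tailWeight R β y - tailWeight R β x| * N
          * max |tailWeight R β y| |tailWeight R β x| ^ (N - 1) :=
          (le_abs_self _).trans (abs_pow_sub_pow_le _ _ N)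
      _ ≤ |tailWeight R β y - tailWeight R β x| * N * 1 := by
          gcongr
          exact pow_le_one₀ (by positivity) max_le_one
      _ = N * (tailWeight R β y - tailWeight R β x) := by
          rw [abs_of_nonneg (sub_nonneg.2 (tailWeight_mono hR hβ hxy))]
          ring
  calc tailTest R β N y - tailTest R β N x
      = tailWeight R β y ^ N * (y - x)
          + x * (tailWeight R β y ^ N - tailWeight R β x ^ N) := by
        unfold tailTest
        ring
    _ ≤ 1 * (y - x) + x * (N * (tailWeight R β y - tailWeight R β x)) := by
        gcongr
        exact pow_le_one₀ (weight_nonneg y) (weight_le_one y)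
    _ = (y - x) + N * (x * (tailWeight R β y - tailWeight R β x)) := by ring
    _ ≤ (y - x) + N * (max 1 β * (y - x)) := by
        gcongr (y - x) + N * ?_
        exact mul_tailWeight_sub_le hR hβ hx hxy
    _ = (1 + N * max 1 β) * (y - x) := by ring

theorem isLipschitzTest_tailTest (hR : 0 < R) (hβ : 0 ≤ β) (hN : N ≠ 0) :
    IsLipschitzTest (tailTest R β N) where
  nonneg v := by
    rcases le_total v R with h | h
    · rw [tailTest_of_le hR hN h]
    · exact tailTest_nonneg hR hβ (hR.le.trans h)
  exists_lipschitzWith := by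
    let Λ : ℝ≥0 := ⟨1 + N * max 1 β, by positivity⟩
    have lipschitzOn : LipschitzOnWith Λ (tailTest R β N) (Ici R) :=
      LipschitzOnWith.of_le_add_mul Λ fun x hx y hy => by
        have : 0 ≤ (Λ : ℝ) := Λ.2
        rcases le_total x y with h | h
        · exact (tailTest_mono hR hβ hx h).trans (le_add_of_nonneg_right (by positivity))
        · rw [Real.dist_eq, abs_of_nonneg (sub_nonneg.2 h)]
          exact sub_le_iff_le_add'.1 (tailTest_sub_le hR hβ hy h)
    refine ⟨Λ, ?_⟩
    have through_max : tailTest R β N = tailTest R β N ∘ max R := by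
      funext v
      rcases le_total v R with h | h
      · simp only [Function.comp_apply, max_eq_left h, tailTest_of_le hR hN h,
          tailTest_of_le hR hN le_rfl]
      · rw [Function.comp_apply, max_eq_right h]
    rw [through_max, ← lipschitzOnWith_univ]
    simpa using lipschitzOn.comp ((LipschitzWith.id.const_max R).lipschitzOnWith (s := univ))
      fun v _ => le_max_left R v
  exists_eq_zero_of_le := ⟨R, hR, fun _ => tailTest_of_le hR hN⟩

theorem mul_tailTest_le_coagIncrement (hR : 0 < R) (hβ : 0 ≤ β) (hv : 0 ≤ v) (hw : 0 ≤ w) :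
    N * tailTest R β N v * (tailWeight R β (v + w) - tailWeight R β v)
      ≤ coagIncrement (tailTest R β N) (v, w) := by
  have weight_nonneg (z : ℝ) : 0 ≤ tailWeight R β z := tailWeight_nonneg hR hβ
  have gain_v := nat_mul_pow_mul_sub_le (weight_nonneg v) (tailWeight_le_one hR)
    (tailWeight_mono hR hβ (le_add_of_nonneg_right hw)) N
  have gain_w : 0 ≤ tailWeight R β (v + w) ^ N - tailWeight R β w ^ N :=
    sub_nonneg.2 (pow_le_pow_left₀ (weight_nonneg w)
      (tailWeight_mono hR hβ (le_add_of_nonneg_left hv)) N)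
  calc N * tailTest R β N v * (tailWeight R β (v + w) - tailWeight R β v)
      = v * (N * tailWeight R β v ^ N * (tailWeight R β (v + w) - tailWeight R β v)) := by
        unfold tailTest
        ring
    _ ≤ v * (tailWeight R β (v + w) ^ N - tailWeight R β v ^ N)
          + w * (tailWeight R β (v + w) ^ N - tailWeight R β w ^ N) :=
        le_add_of_le_of_nonneg (mul_le_mul_of_nonneg_left gain_v hv) (mul_nonneg hw gain_w)
    _ = coagIncrement (tailTest R β N) (v, w) := by
        unfold coagIncrement tailTest
        ring

theorem coagIncrement_tailTest_nonneg (hR : 0 < R) (hβ : 0 ≤ β) (hv : 0 ≤ v) (hw : 0 ≤ w) :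
    0 ≤ coagIncrement (tailTest R β N) (v, w) :=
  (mul_nonneg (mul_nonneg N.cast_nonneg (tailTest_nonneg hR hβ hv)) (sub_nonneg.2
    (tailWeight_mono hR hβ (le_add_of_nonneg_right hw)))).trans
    (mul_tailTest_le_coagIncrement hR hβ hv hw)

end TailTest

section TailMass

variable {K : ℝ → ℝ → ℝ} {γ B T R s x : ℝ} {f : ℝ → Measure ℝ} {fin m : Measure ℝ} {N : ℕ}

namespace IsSuperlinearKernel

theorem mul_tailTest_le_mul_coagIncrement (hK : IsSuperlinearKernel K γ B) (hR : 0 < R)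
    {a c v w : ℝ} (ha : 0 < a) (haw : a ≤ w) (hwR : w ≤ R) (hv : R ≤ v) (hc : 0 ≤ c)
    (hcK : c * v ^ γ ≤ K v w) :
    c * (R ^ (γ - 1) * min 1 (γ - 1) * (a / 2)) * N * tailTest R (γ - 1) N v
      ≤ K v w * coagIncrement (tailTest R (γ - 1) N) (v, w) := by
  set q := tailWeight R (γ - 1)
  set φ := tailTest R (γ - 1) N
  have hβ : 0 ≤ γ - 1 := sub_nonneg.2 hK.one_lt.le
  have hv₀ : 0 < v := hR.trans_le hv
  have hw₀ : 0 < w := ha.trans_le haw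
  have Nφ_nonneg : 0 ≤ N * φ v := mul_nonneg N.cast_nonneg (tailTest_nonneg hR hβ hv₀.le)
  have q_sub_nonneg : 0 ≤ q (v + w) - q v :=
    sub_nonneg.2 (tailWeight_mono hR hβ (le_add_of_nonneg_right hw₀.le))
  have q_sub_ge := le_rpow_mul_tailWeight_sub hR hβ hv ha.le haw hwR
  rw [sub_add_cancel] at q_sub_ge
  calc c * (R ^ (γ - 1) * min 1 (γ - 1) * (a / 2)) * N * φ v
      = c * (N * φ v) * (R ^ (γ - 1) * min 1 (γ - 1) * (a / 2)) := by ring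
    _ ≤ c * (N * φ v) * (v ^ γ * (q (v + w) - q v)) := by gcongr
    _ = c * v ^ γ * (N * φ v * (q (v + w) - q v)) := by ring
    _ ≤ K v w * coagIncrement φ (v, w) :=
        mul_le_mul hcK (mul_tailTest_le_coagIncrement hR hβ hv₀.le hw₀.le)
          (mul_nonneg Nφ_nonneg q_sub_nonneg) (hK.nonneg v w hv₀ hw₀)

theorem mul_integral_tailTest_le_coagIntegral (hK : IsSuperlinearKernel K γ B)
    (hm : HasFiniteMoment γ m) (hR : 0 < R) (hN : N ≠ 0) {a b c : ℝ} (ha : 0 < a) (hbR : b ≤ R)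
    (hc : 0 ≤ c) (hcK : ∀ v, R ≤ v → ∀ w ∈ Icc a b, c * v ^ γ ≤ K v w) :
    c * (R ^ (γ - 1) * min 1 (γ - 1) * (a / 2)) * m.real (Icc a b) * N *
        ∫ v, tailTest R (γ - 1) N v ∂m ≤ coagIntegral K (tailTest R (γ - 1) N) m := by
  set φ := tailTest R (γ - 1) N
  set c₁ := R ^ (γ - 1) * min 1 (γ - 1) * (a / 2)
  have hβ : 0 ≤ γ - 1 := sub_nonneg.2 hK.one_lt.le
  have hφ : IsLipschitzTest φ := isLipschitzTest_tailTest hR hβ hN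
  obtain ⟨Λ, hΛ⟩ := hφ.exists_lipschitzWith
  have := hm.isFiniteMeasure
  have φ_integrable := integrable_of_lipschitzWith hK.one_lt.le hm hΛ hφ.map_zero
  have indicator_integrable : Integrable ((Icc a b).indicator (1 : ℝ → ℝ)) m :=
    (integrable_const 1).indicator measurableSet_Icc
  let G (p : ℝ × ℝ) : ℝ := c * c₁ * N * (φ p.1 * (Icc a b).indicator 1 p.2)
  calc c * c₁ * m.real (Icc a b) * N * ∫ v, φ v ∂m = ∫ p, G p ∂m.prod m := by
        rw [integral_const_mul, integral_prod_mul φ ((Icc a b).indicator 1),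
          integral_indicator_one measurableSet_Icc]
        ring
    _ ≤ coagIntegral K φ m := by
        refine hK.integral_le_coagIntegral hm hφ
          ((φ_integrable.mul_prod indicator_integrable).const_mul _) fun v w hv hw => ?_
        have rate_nonneg : 0 ≤ K v w * coagIncrement φ (v, w) :=
          mul_nonneg (hK.nonneg v w hv hw) (coagIncrement_tailTest_nonneg hR hβ hv.le hw.le)
        by_cases hwab : w ∈ Icc a b
        · rcases le_total v R with hvR | hvR
          · simpa [G, φ, tailTest_of_le hR hN hvR] using rate_nonneg
          · simpa [G, indicator_of_mem hwab] using hK.mul_tailTest_le_mul_coagIncrement hR ha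
              hwab.1 (hwab.2.trans hbR) hvR hc (hcK v hvR w hwab)
        · simpa [G, indicator_of_notMem hwab] using rate_nonneg

end IsSuperlinearKernel

theorem HasFiniteMoment.pow_tailWeight_mul_measureReal_le (hm : HasFiniteMoment γ m) (hγ : 1 ≤ γ)
    (hR : 0 < R) (hN : N ≠ 0) {L : ℝ} (hL : 1 ≤ L) :
    tailWeight R (γ - 1) L ^ N * m.real (Ici L) ≤ ∫ v, tailTest R (γ - 1) N v ∂m := by
  have hβ : 0 ≤ γ - 1 := sub_nonneg.2 hγ
  have := hm.isFiniteMeasure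
  have weight_nonneg : 0 ≤ tailWeight R (γ - 1) L := tailWeight_nonneg hR hβ
  have hφ : IsLipschitzTest (tailTest R (γ - 1) N) := isLipschitzTest_tailTest hR hβ hN
  obtain ⟨Λ, hΛ⟩ := hφ.exists_lipschitzWith
  refine le_trans ?_ (mul_meas_ge_le_integral_of_nonneg (.of_forall hφ.nonneg)
    (integrable_of_lipschitzWith hγ hm hΛ hφ.map_zero) (tailWeight R (γ - 1) L ^ N))
  refine mul_le_mul_of_nonneg_left (measureReal_mono fun v hv => ?_) (pow_nonneg weight_nonneg N)
  calc tailWeight R (γ - 1) L ^ N ≤ tailWeight R (γ - 1) v ^ N :=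
        pow_le_pow_left₀ weight_nonneg (tailWeight_mono hR hβ hv) N
    _ ≤ v * tailWeight R (γ - 1) v ^ N :=
        le_mul_of_one_le_left (pow_nonneg (tailWeight_nonneg hR hβ) N) (hL.trans hv)

theorem HasFiniteMoment.integral_tailTest_le (hm : HasFiniteMoment γ m) (hγ : 1 ≤ γ) (hR : 0 < R)
    (hN : N ≠ 0) : ∫ v, tailTest R (γ - 1) N v ∂m ≤ ∫ v, (1 + v ^ γ) ∂m := by
  have hβ : 0 ≤ γ - 1 := sub_nonneg.2 hγ
  have hφ : IsLipschitzTest (tailTest R (γ - 1) N) := isLipschitzTest_tailTest hR hβ hN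
  obtain ⟨Λ, hΛ⟩ := hφ.exists_lipschitzWith
  refine integral_mono_ae (integrable_of_lipschitzWith hγ hm hΛ hφ.map_zero) hm.integrable ?_
  filter_upwards [hm.ae_pos] with v hv
  exact (tailTest_le_self hR hβ hv.le).trans (le_one_add_rpow hγ hv.le)

namespace IsWeakSolution

theorem exists_le_measureReal_Icc (hf : IsWeakSolution K γ T f fin)
    (hK : IsSuperlinearKernel K γ B) (hs : s ∈ Icc 0 T) (hx : x ∈ (f s).support ∩ Ioi 0) {ε : ℝ}
    (hε : 0 < ε) (hεx : ε < x) :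
    ∃ δ > 0, ∀ r ∈ Icc s T, δ ≤ (f r).real (Icc (x - ε) (x + ε)) := by
  have := (hf.hasFiniteMoment hs).isFiniteMeasure
  obtain ⟨c, hc, persists⟩ := hf.exists_pos_mul_integral_tent_le hK hε hεx
  have tent_pos := integral_tent_pos_of_mem_support hx.1 hε
  refine ⟨c * (∫ v, tent x ε v ∂f s) / ε, by positivity, fun r hr => ?_⟩
  have := (hf.hasFiniteMoment ⟨hs.1.trans hr.1, hr.2⟩).isFiniteMeasure
  rw [div_le_iff₀' hε]
  exact (persists s r hs.1 hr.1 hr.2).trans (integral_tent_le hε.le)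

theorem exists_mul_integral_tailTest_le_coagIntegral (hf : IsWeakSolution K γ T f fin)
    (hK : IsSuperlinearKernel K γ B) (hs : s ∈ Icc 0 T) (hx : x ∈ (f s).support ∩ Ioi 0) :
    ∃ R > 0, ∃ κ > 0, ∀ N : ℕ, N ≠ 0 → ∀ r ∈ Icc s T,
      κ * N * ∫ v, tailTest R (γ - 1) N v ∂f r ≤ coagIntegral K (tailTest R (γ - 1) N) (f r) := by
  have x_pos : 0 < x := hx.2
  have sub_half_pos : 0 < x - x / 2 := sub_pos.2 (half_lt_self x_pos)
  have hβ : 0 < γ - 1 := sub_pos.2 hK.one_lt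
  obtain ⟨δ, hδ, mass_ge⟩ :=
    hf.exists_le_measureReal_Icc hK hs hx (half_pos x_pos) (half_lt_self x_pos)
  obtain ⟨c, hc, hcK⟩ := hK.eventually_mul_rpow_le (x - x / 2) (x + x / 2) sub_half_pos
  obtain ⟨R, hR⟩ := eventually_atTop.1 (hcK.and (eventually_ge_atTop (x + x / 2)))
  have hbR : x + x / 2 ≤ R := (hR R le_rfl).2
  have R_pos : 0 < R := by linarith
  refine ⟨R, R_pos, c * (R ^ (γ - 1) * min 1 (γ - 1) * ((x - x / 2) / 2)) * δ, by positivity,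
    fun N hN r hr => ?_⟩
  have : 0 ≤ min 1 (γ - 1) := by positivity
  refine le_trans ?_ (hK.mul_integral_tailTest_le_coagIntegral
    (hf.hasFiniteMoment ⟨hs.1.trans hr.1, hr.2⟩) R_pos hN sub_half_pos hbR hc.le
    fun v hv => (hR v hv).1)
  gcongr
  · exact integral_nonneg (isLipschitzTest_tailTest R_pos hβ.le hN).nonneg
  · exact mass_ge r hr

/-- The growth factor `θ ^ N` of the integral of `tailTest R (γ - 1) N` between `s` and `T` beats
`tailWeight R (γ - 1) L ^ N` for large `L`, while the integral stays bounded in `N`. -/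
theorem exists_measure_Ici_eq_zero (hf : IsWeakSolution K γ T f fin)
    (hK : IsSuperlinearKernel K γ B) (hs : s ∈ Ico 0 T) (hx : x ∈ (f s).support ∩ Ioi 0) :
    ∃ L, f s (Ici L) = 0 := by
  have hsT : s ∈ Icc 0 T := Ico_subset_Icc_self hs
  have hTT : T ∈ Icc 0 T := right_mem_Icc.2 (hs.1.trans hs.2.le)
  obtain ⟨R, hR, κ, hκ, growth⟩ := hf.exists_mul_integral_tailTest_le_coagIntegral hK hsT hx
  let θ := Real.exp (κ / 2 * (T - s))
  have one_lt_θ : 1 < θ := Real.one_lt_exp_iff.2 (mul_pos (half_pos hκ) (sub_pos.2 hs.2))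
  have weight_tendsto : Tendsto (fun L => tailWeight R (γ - 1) L * θ) atTop (𝓝 θ) := by
    simpa using (tendsto_tailWeight (sub_pos.2 hK.one_lt)).mul_const θ
  obtain ⟨L, one_lt, one_le_L⟩ :=
    ((weight_tendsto.eventually_const_lt one_lt_θ).and (eventually_ge_atTop 1)).exists
  have bounded (N : ℕ) (hN : N ≠ 0) :
      (tailWeight R (γ - 1) L * θ) ^ N * (f s).real (Ici L) ≤ ∫ v, (1 + v ^ γ) ∂f T := by
    calc (tailWeight R (γ - 1) L * θ) ^ N * (f s).real (Ici L)
        = tailWeight R (γ - 1) L ^ N * (f s).real (Ici L) * θ ^ N := by ring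
      _ ≤ (∫ v, tailTest R (γ - 1) N v ∂f s) * θ ^ N := by
          gcongr
          exact (hf.hasFiniteMoment hsT).pow_tailWeight_mul_measureReal_le hK.one_lt.le hR hN
            one_le_L
      _ = (∫ v, tailTest R (γ - 1) N v ∂f s) * Real.exp (κ * N / 2 * (T - s)) := by
          rw [← Real.exp_nat_mul]
          ring_nf
      _ ≤ ∫ v, tailTest R (γ - 1) N v ∂f T :=
          hf.integral_mul_exp_le hK (isLipschitzTest_tailTest hR (sub_pos.2 hK.one_lt).le hN)
            hs.1 hs.2.le le_rfl (growth N hN)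
      _ ≤ ∫ v, (1 + v ^ γ) ∂f T :=
          (hf.hasFiniteMoment hTT).integral_tailTest_le hK.one_lt.le hR hN
  have := (hf.hasFiniteMoment hsT).isFiniteMeasure
  refine ⟨L, by_contra fun h_ne => ?_⟩
  have tail_pos : 0 < (f s).real (Ici L) := ENNReal.toReal_pos h_ne (measure_ne_top _ _)
  obtain ⟨N, hN, hN₀⟩ := ((((tendsto_pow_atTop_atTop_of_one_lt one_lt).atTop_mul_const
    tail_pos).eventually_gt_atTop _).and (eventually_ne_atTop 0)).exists
  exact hN.not_ge (bounded N hN₀)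

end IsWeakSolution
end TailMass

theorem no_weak_solution_general {K : ℝ → ℝ → ℝ} {γ B : ℝ} (hK : IsSuperlinearKernel K γ B)
    {fin : Measure ℝ} [IsFiniteMeasureOnCompacts fin] (hconc : fin (Iic 0) = 0) (hne : fin ≠ 0)
    (hdirac : ¬ IsSingleDirac fin) {T : ℝ} (hT : 0 < T) :
    ¬ ∃ f : ℝ → Measure ℝ, IsWeakSolution K γ T f fin := by
  rintro ⟨f, hf⟩
  have hfin := nontrivial_support_inter_Ioi hconc hne hdirac
  have half_mem : T / 2 ∈ Ioo 0 T := ⟨half_pos hT, half_lt_self hT⟩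
  obtain ⟨x, hx⟩ := hfin.nonempty
  obtain ⟨L, hL⟩ := hf.exists_measure_Ici_eq_zero hK (Ioo_subset_Ico_self half_mem)
    ⟨hf.support_fin_subset hK (Ioo_subset_Icc_self half_mem) hx, hx.2⟩
  exact (hf.measure_Ici_pos hK hfin (Ioo_subset_Ioc_self half_mem) L).ne' hL

theorem div_add_mem_Icc {v w : ℝ} (hv : 0 ≤ v) (hw : 0 ≤ w) : v / (v + w) ∈ Icc 0 1 :=
  ⟨div_nonneg hv (add_nonneg hv hw),
    div_le_one_of_le₀ (le_add_of_nonneg_right hw) (add_nonneg hv hw)⟩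

namespace KernelAssumptionA

variable {K h : ℝ → ℝ → ℝ} {g : ℝ → ℝ} {γ H H₀ H₁ G₀ G₁ k v w : ℝ}

theorem eq_mul (hK : KernelAssumptionA K h g γ H H₀ H₁ G₀ G₁ k) (hv : 0 < v) (hw : 0 < w) :
    K v w = h v w * g (v / (v + w)) :=
  hK.K_eq v w hv.le hw.le (add_pos hv hw)

theorem measurable_indicator (hK : KernelAssumptionA K h g γ H H₀ H₁ G₀ G₁ k) :
    Measurable ((Ioi 0 ×ˢ Ioi 0).indicator fun p : ℝ × ℝ => K p.1 p.2) := by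
  have ratio_continuous :
      ContinuousOn (fun p : ℝ × ℝ => p.1 / (p.1 + p.2)) (Ioi 0 ×ˢ Ioi 0) :=
    .div (by fun_prop) (by fun_prop) fun p hp => (add_pos hp.1 hp.2).ne'
  have product_continuous : ContinuousOn (fun p : ℝ × ℝ => h p.1 p.2 * g (p.1 / (p.1 + p.2)))
      (Ioi 0 ×ˢ Ioi 0) :=
    (hK.h_cont.mono (prod_mono Ioi_subset_Ici_self Ioi_subset_Ici_self)).mul
      (hK.g_cont.comp ratio_continuous fun p hp => div_add_mem_Icc (le_of_lt hp.1) (le_of_lt hp.2))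
  have K_continuous : ContinuousOn (fun p : ℝ × ℝ => K p.1 p.2) (Ioi 0 ×ˢ Ioi 0) :=
    product_continuous.congr fun p hp => hK.eq_mul hp.1 hp.2
  classical
  rw [← piecewise_eq_indicator]
  exact K_continuous.measurable_piecewise continuousOn_const
    (measurableSet_Ioi.prod measurableSet_Ioi)

theorem le_mul_rpow_add_rpow (hK : KernelAssumptionA K h g γ H H₀ H₁ G₀ G₁ k) (hv : 0 < v)
    (hw : 0 < w) : K v w ≤ H₁ * G₁ * (v ^ γ + w ^ γ) := by
  have hx := div_add_mem_Icc hv.le hw.le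
  have g_nonneg : 0 ≤ g (v / (v + w)) :=
    (mul_nonneg hK.G₀_pos.le (by positivity)).trans (hK.g_lower _ hx)
  have := hK.H₁_pos
  calc K v w = h v w * g (v / (v + w)) := hK.eq_mul hv hw
    _ ≤ H₁ * (v ^ γ + w ^ γ) * G₁ := by
        gcongr
        exacts [hK.h_upper v w hv.le hw.le, hK.g_upper _ hx]
    _ = H₁ * G₁ * (v ^ γ + w ^ γ) := by ring

theorem pos_of_ne (hK : KernelAssumptionA K h g γ H H₀ H₁ G₀ G₁ k) (hv : 0 < v) (hw : 0 < w)
    (hvw : v ≠ w) : 0 < K v w := by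
  let R := max (max v v⁻¹) (max w w⁻¹)
  have v_mem : v ∈ Icc (1 / R) R :=
    ⟨by simpa using inv_anti₀ (inv_pos.2 hv) (le_max_of_le_left (le_max_right v v⁻¹)),
      le_max_of_le_left (le_max_left v v⁻¹)⟩
  have w_mem : w ∈ Icc (1 / R) R :=
    ⟨by simpa using inv_anti₀ (inv_pos.2 hw) (le_max_of_le_right (le_max_right w w⁻¹)),
      le_max_of_le_right (le_max_left w w⁻¹)⟩
  obtain ⟨c, hc, hch⟩ := hK.h_posOn R (hv.trans_le v_mem.2)
  have ratio_ne : v / (v + w) - 1 / 2 ≠ 0 := by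
    rw [sub_ne_zero, ne_eq, div_eq_div_iff (add_pos hv hw).ne' two_ne_zero]
    exact fun h => hvw (by linarith)
  rw [hK.eq_mul hv hw]
  refine mul_pos (hc.trans_le (hch v v_mem w w_mem))
    (lt_of_lt_of_le ?_ (hK.g_lower _ (div_add_mem_Icc hv.le hw.le)))
  exact mul_pos hK.G₀_pos (Real.rpow_pos_of_pos (abs_pos.2 ratio_ne) k)

/-- For `v ≥ 4 w` the ratio `v / (v + w)` is at least `4 / 5`, hence `3 / 10` away from the zero
of `g`. -/
theorem mul_rpow_le (hK : KernelAssumptionA K h g γ H H₀ H₁ G₀ G₁ k) (hw : 0 < w)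
    (hwv : 4 * w ≤ v) (hHv : H ≤ v) : H₀ * (G₀ * (3 / 10) ^ k) * v ^ γ ≤ K v w := by
  have hv : 0 < v := by linarith
  have := hK.H₀_pos
  have := hK.G₀_pos
  have ratio_far : 3 / 10 ≤ |v / (v + w) - 1 / 2| := by
    have : 4 / 5 ≤ v / (v + w) := by
      rw [div_le_div_iff₀ (by norm_num) (add_pos hv hw)]
      linarith
    exact le_abs.2 (.inl (by linarith))
  have g_ge : G₀ * (3 / 10) ^ k ≤ g (v / (v + w)) := by
    refine le_trans ?_ (hK.g_lower _ (div_add_mem_Icc hv.le hw.le))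
    have := zero_le_one.trans hK.k_ge_one
    gcongr
  have h_ge : H₀ * v ^ γ ≤ h v w := by
    refine le_trans ?_ (hK.h_lower v w hv.le hw.le (by linarith))
    gcongr
    exact le_add_of_nonneg_right (by positivity)
  calc H₀ * (G₀ * (3 / 10) ^ k) * v ^ γ = H₀ * v ^ γ * (G₀ * (3 / 10) ^ k) := by ring
    _ ≤ h v w * g (v / (v + w)) :=
        mul_le_mul h_ge g_ge (by positivity) (le_trans (by positivity) h_ge)
    _ = K v w := (hK.eq_mul hv hw).symm

theorem isSuperlinearKernel (hK : KernelAssumptionA K h g γ H H₀ H₁ G₀ G₁ k) :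
    IsSuperlinearKernel K γ (H₁ * G₁) where
  one_lt := hK.γ_gt_one
  measurable_indicator := hK.measurable_indicator
  nonneg v w hv hw := hK.K_nonneg v w hv.le hw.le
  pos_of_ne _ _ hv hw := hK.pos_of_ne hv hw
  le_mul_add _ _ hv hw := hK.le_mul_rpow_add_rpow hv hw
  eventually_mul_rpow_le a b ha := by
    refine ⟨H₀ * (G₀ * (3 / 10) ^ k), ?_, ?_⟩
    · exact mul_pos hK.H₀_pos (mul_pos hK.G₀_pos (by positivity))
    · filter_upwards [eventually_ge_atTop (4 * b), eventually_ge_atTop H] with v hbv hHv w hw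
      exact hK.mul_rpow_le (ha.trans_le hw.1) (by linarith [hw.2]) hHv

end KernelAssumptionA

/-- Non-existence of any weak solution: if `K` satisfies
Assumption A and the initial datum is a nonzero Radon measure on `(0,∞)` with finite
`γ`-moment which is not a single Dirac measure, then for every `T > 0` there is no
weak solution on `[0,T]` at all (mass-conserving or not). -/
theorem no_weak_solution
    (K h : ℝ → ℝ → ℝ) (g : ℝ → ℝ) (γ H H₀ H₁ G₀ G₁ k : ℝ)
    (hK : KernelAssumptionA K h g γ H H₀ H₁ G₀ G₁ k)
    (fin : Measure ℝ) (hconc : fin (Iic 0) = 0) (hne : fin ≠ 0)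
    (hγmom : Integrable (fun v => 1 + v ^ γ) fin)
    (hdirac : ¬ IsSingleDirac fin) :
    ∀ T : ℝ, 0 < T → ¬ ∃ f : ℝ → Measure ℝ, IsWeakSolution K γ T f fin := by
  have := (HasFiniteMoment.mk hconc hγmom).isFiniteMeasure
  exact fun T hT => no_weak_solution_general hK.isSuperlinearKernel hconc hne hdirac hT
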